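/- Let p = 3. Under the null hypothesis of uniformity, i.e., under P_0^{(n)} = U_3^{⊗n} on (S^2)^n, each of the test statistics T_+^{(n)}(x) := √n (3 λ̂_{n1}(x) − 1) and T_−^{(n)}(x) := −√n (3 λ̂_{n3}(x) − 1) converges in distribution, as n → ∞, to the probability distribution on ℝ with cumulative distribution function ℓ ↦ { Φ(√5 ℓ) + Φ(√5 ℓ / 2) + 3 Φ''(√5 ℓ / 2) − 1 } · 1[ℓ > 0], where Φ is the standard normal cumulative distribution function and Φ''(t) = −t e^{−t²/2}/√(2π) is its second derivative. -/

import Mathlib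

open MeasureTheory ProbabilityTheory Filter Matrix Real
open scoped ENNReal NNReal Topology

noncomputable section

/-- The sample covariance matrix `S_n(x) = (1/n) Σ_i x_i x_i'`. -/
def Sn (p n : ℕ) (x : Fin n → (Fin p → ℝ)) : Matrix (Fin p) (Fin p) ℝ :=
  Matrix.of fun a b => (1 / (n:ℝ)) * ∑ i, x i a * x i b

/-- Largest eigenvalue of a (symmetric) real matrix, via the Rayleigh quotient. -/
def maxEig {p : ℕ} (A : Matrix (Fin p) (Fin p) ℝ) : ℝ :=
  sSup {r | ∃ v : Fin p → ℝ, (∑ i, v i ^ 2) = 1 ∧ r = v ⬝ᵥ A.mulVec v}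

/-- Smallest eigenvalue of a (symmetric) real matrix, via the Rayleigh quotient. -/
def minEig {p : ℕ} (A : Matrix (Fin p) (Fin p) ℝ) : ℝ :=
  sInf {r | ∃ v : Fin p → ℝ, (∑ i, v i ^ 2) = 1 ∧ r = v ⬝ᵥ A.mulVec v}

/-- The standard normal cumulative distribution function `Φ`. -/
def stdNormalCDF (t : ℝ) : ℝ :=
  ∫ u in Set.Iic t, (Real.sqrt (2 * Real.pi))⁻¹ * Real.exp (-u ^ 2 / 2)

/-- The second derivative `Φ''(t) = -t e^{-t²/2}/√(2π)` of the standard normal cdf. -/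
def stdNormalCDF'' (t : ℝ) : ℝ := -t * Real.exp (-t ^ 2 / 2) / Real.sqrt (2 * Real.pi)

/-!
For the quadratic map `φ : S² → ℝ⁵` sending `x` to the coordinates of the traceless matrix
`√5 (3 x xᵀ - I)`, the uniform law makes `φ` centred with identity covariance, and `√5 T₊` is the
largest eigenvalue of the traceless symmetric matrix `C(y)` with coordinates
`y = n^{-1/2} ∑ᵢ φ(xᵢ)`. By the central limit theorem `y` is asymptotically a standard Gaussian
vector, and the set `{y | λ_max(C(y)) ≤ a}` is convex, so its frontier is null and its probability
converges to its Gaussian measure. The statistic `T₋` is treated in the same way with `-φ`.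

In terms of the characteristic polynomial, `λ_max(C(y)) ≤ a` is an inequality between `‖y‖` and
`det C(y)`, which is twice Cartan's isoparametric cubic. This cubic is harmonic and has gradient of
constant length on the unit sphere `S⁴`. Integration by parts turns these two properties into a
recursion for its moments on `S⁴`, which is the one of the uniform law on `[-1, 1]`. In polar
coordinates the Gaussian measure is therefore an explicit one-dimensional integral.
-/

section UniformSphere

variable {ι : Type*} [Fintype ι]

lemma isCompact_setOf_sum_sq_eq_one : IsCompact {x : ι → ℝ | ∑ i, x i ^ 2 = 1} := by
  refine Metric.isCompact_of_isClosed_isBounded (isClosed_eq (by fun_prop) continuous_const) ?_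
  refine (Metric.isBounded_closedBall (x := (0 : ι → ℝ)) (r := 1)).subset fun x hx ↦ ?_
  rw [mem_closedBall_zero_iff, pi_norm_le_iff_of_nonneg zero_le_one]
  intro i
  rw [norm_eq_abs, ← sq_le_one_iff_abs_le_one]
  have : x i ^ 2 ≤ ∑ j, x j ^ 2 :=
    Finset.single_le_sum (f := fun j ↦ x j ^ 2) (fun _ _ ↦ sq_nonneg _) (Finset.mem_univ i)
  exact this.trans hx.le

variable [DecidableEq ι]

lemma exists_orthogonal_transpose_mul_mul_eq_diagonal {A : Matrix ι ι ℝ} (hA : A.IsHermitian) :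
    ∃ V : Matrix ι ι ℝ, V * Vᵀ = 1 ∧ Vᵀ * A * V = diagonal hA.eigenvalues := by
  refine ⟨hA.eigenvectorUnitary, ?_, ?_⟩
  · rw [← conjTranspose_eq_transpose_of_trivial, ← star_eq_conjTranspose]
    exact Unitary.coe_mul_star_self _
  · rw [← conjTranspose_eq_transpose_of_trivial, ← star_eq_conjTranspose]
    exact (Unitary.conjStarAlgAut_star_apply hA.eigenvectorUnitary A).symm.trans
      hA.conjStarAlgAut_star_eigenvectorUnitary

lemma trace_mul_self_eq_sum_eigenvalues_sq {A : Matrix ι ι ℝ} (hA : A.IsHermitian) :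
    (A * A).trace = ∑ i, hA.eigenvalues i ^ 2 := by
  conv_lhs => rw [hA.spectral_theorem]
  rw [← map_mul, Unitary.conjStarAlgAut_apply, trace_mul_comm, ← mul_assoc,
    Unitary.coe_star_mul_self, one_mul, diagonal_mul_diagonal, trace_diagonal]
  simp [sq]

/-- The uniform law on the unit sphere of `ι → ℝ` (normalised when `U` is a probability measure):
it charges only the sphere and is invariant under orthogonal matrices. -/
structure IsSphereUniform (U : Measure (ι → ℝ)) : Prop where
  compl_sphere_eq_zero : U {x | ∑ i, x i ^ 2 = 1}ᶜ = 0
  map_mulVec : ∀ O : Matrix ι ι ℝ, O * Oᵀ = 1 → U.map (fun x ↦ O *ᵥ x) = U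

namespace IsSphereUniform

variable {U : Measure (ι → ℝ)}

lemma ae_sum_sq_eq_one (hU : IsSphereUniform U) : ∀ᵐ x ∂U, ∑ i, x i ^ 2 = 1 :=
  mem_ae_iff.2 hU.compl_sphere_eq_zero

lemma integrable_of_continuous [IsFiniteMeasure U] (hU : IsSphereUniform U) {g : (ι → ℝ) → ℝ}
    (hg : Continuous g) : Integrable g U := by
  have := hg.continuousOn.integrableOn_compact (μ := U) isCompact_setOf_sum_sq_eq_one
  rwa [IntegrableOn, Measure.restrict_eq_self_of_ae_mem (by exact hU.ae_sum_sq_eq_one)] at this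

lemma integral_comp_mulVec (hU : IsSphereUniform U) {O : Matrix ι ι ℝ} (hO : O * Oᵀ = 1)
    {g : (ι → ℝ) → ℝ} (hg : Continuous g) : ∫ x, g (O *ᵥ x) ∂U = ∫ x, g x ∂U := by
  conv_rhs => rw [← hU.map_mulVec O hO]
  rw [integral_map (by fun_prop) hg.aestronglyMeasurable]

lemma integral_comp_perm (hU : IsSphereUniform U) (σ : Equiv.Perm ι) {g : (ι → ℝ) → ℝ}
    (hg : Continuous g) : ∫ x, g (x ∘ σ) ∂U = ∫ x, g x ∂U := by
  simpa only [permMatrix_mulVec] using hU.integral_comp_mulVec (O := σ.permMatrix ℝ)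
    (by rw [transpose_permMatrix, ← permMatrix_mul, inv_mul_cancel, permMatrix_one]) hg

lemma integral_comp_reflection (hU : IsSphereUniform U) {w : ι → ℝ} {c : ℝ}
    (hc : c * (w ⬝ᵥ w) = 2) {g : (ι → ℝ) → ℝ} (hg : Continuous g) :
    ∫ x, g (x - (c * (w ⬝ᵥ x)) • w) ∂U = ∫ x, g x ∂U := by
  have hR (x : ι → ℝ) : (1 - c • vecMulVec w w) *ᵥ x = x - (c * (w ⬝ᵥ x)) • w := by
    ext i
    simp only [sub_mulVec, one_mulVec, smul_mulVec, vecMulVec_mulVec, Pi.sub_apply, Pi.smul_apply,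
      MulOpposite.smul_eq_mul_unop, MulOpposite.unop_op, smul_eq_mul]
    ring
  simp_rw [← hR]
  refine hU.integral_comp_mulVec ?_ hg
  have hsq : (c • vecMulVec w w) * (c • vecMulVec w w) = (2 * c) • vecMulVec w w := by
    rw [smul_mul_smul, vecMulVec_mul_vecMulVec, vecMulVec_smul, smul_smul, ← hc]
    congr 1
    ring
  rw [transpose_sub, transpose_one, transpose_smul, transpose_vecMulVec, mul_sub, sub_mul, sub_mul,
    one_mul, one_mul, mul_one, hsq]
  module

/-- The `3`-`4`-`5` reflections along `eᵢ ± 2 eⱼ` exchange `xᵢ` and `(3 xᵢ ∓ 4 xⱼ) / 5`;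
adding both cancels the odd moments. -/
lemma integral_coord_pow_four_add (hU : IsSphereUniform U) [IsFiniteMeasure U] {i j : ι}
    (hij : i ≠ j) :
    1250 * ∫ x, x i ^ 4 ∂U = 162 * ∫ x, x i ^ 4 ∂U + 1728 * ∫ x, x i ^ 2 * x j ^ 2 ∂U +
      512 * ∫ x, x j ^ 4 ∂U := by
  have key (ε : ℝ) (hε : ε ^ 2 = 1) :
      ∫ x, ((3 * x i - ε * (4 * x j)) / 5) ^ 4 ∂U = ∫ x, x i ^ 4 ∂U := by
    rw [← hU.integral_comp_reflection (w := Pi.single i 1 + Pi.single j (2 * ε)) (c := 2 / 5)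
      _ (g := fun x ↦ x i ^ 4) (by fun_prop)]
    · refine integral_congr_ae (.of_forall fun x ↦ ?_)
      simp [hij, add_dotProduct]
      ring
    · simp [hij, hij.symm]
      linear_combination 8 / 5 * hε
  have hadd := congrArg₂ (· + ·) (key 1 (by norm_num)) (key (-1) (by norm_num))
  rw [← integral_add (hU.integrable_of_continuous (by fun_prop))
    (hU.integrable_of_continuous (by fun_prop))] at hadd
  have hexp : ∫ x, ((3 * x i - 1 * (4 * x j)) / 5) ^ 4 + ((3 * x i - -1 * (4 * x j)) / 5) ^ 4 ∂U =
      ∫ x, (162 * x i ^ 4 + 1728 * (x i ^ 2 * x j ^ 2) + 512 * x j ^ 4) / 625 ∂U := by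
    congr with x
    ring
  rw [hexp, integral_div, integral_add (hU.integrable_of_continuous (by fun_prop))
    (hU.integrable_of_continuous (by fun_prop)), integral_add
    (hU.integrable_of_continuous (by fun_prop)) (hU.integrable_of_continuous (by fun_prop)),
    integral_const_mul, integral_const_mul, integral_const_mul] at hadd
  linarith

lemma integral_coord_pow_eq (hU : IsSphereUniform U) (k : ℕ) (i j : ι) :
    ∫ x, x i ^ k ∂U = ∫ x, x j ^ k ∂U := by
  simpa using hU.integral_comp_perm (Equiv.swap i j) (g := fun x ↦ x j ^ k) (by fun_prop)

lemma integral_comp_quadraticForm (hU : IsSphereUniform U) {A : Matrix ι ι ℝ}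
    (hA : A.IsHermitian) {g : ℝ → ℝ} (hg : Continuous g) :
    ∫ x, g (x ⬝ᵥ A *ᵥ x) ∂U = ∫ x, g (∑ i, hA.eigenvalues i * x i ^ 2) ∂U := by
  obtain ⟨V, hV, hAV⟩ := exists_orthogonal_transpose_mul_mul_eq_diagonal hA
  rw [← hU.integral_comp_mulVec hV (g := fun x ↦ g (x ⬝ᵥ A *ᵥ x)) (by fun_prop)]
  congr with x
  rw [mulVec_mulVec, dotProduct_comm, dotProduct_mulVec, ← mulVec_transpose, mulVec_mulVec,
    ← mul_assoc, hAV]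
  simp only [dotProduct, mulVec_diagonal]
  congr! 2 with i
  ring

variable [IsProbabilityMeasure U]

lemma ae_pi_sum_sq_eq_one (hU : IsSphereUniform U) (n : ℕ) :
    ∀ᵐ x ∂(Measure.pi fun _ : Fin n ↦ U), ∀ i, ∑ a, x i a ^ 2 = 1 :=
  eventually_all.2 fun i ↦
    (measurePreserving_eval (fun _ ↦ U) i).quasiMeasurePreserving.ae hU.ae_sum_sq_eq_one

lemma card_mul_integral_coord_sq (hU : IsSphereUniform U) (i : ι) :
    Fintype.card ι * ∫ x, x i ^ 2 ∂U = 1 := by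
  calc Fintype.card ι * ∫ x, x i ^ 2 ∂U = ∑ j, ∫ x, x j ^ 2 ∂U := by
        simp [hU.integral_coord_pow_eq 2 _ i]
    _ = ∫ x, ∑ j, x j ^ 2 ∂U :=
        (integral_finsetSum _ fun j _ ↦ hU.integrable_of_continuous (by fun_prop)).symm
    _ = 1 := by rw [integral_congr_ae hU.ae_sum_sq_eq_one]; simp

lemma card_mul_integral_coord_sq_mul_coord_sq (hU : IsSphereUniform U) (i j : ι) :
    Fintype.card ι * (Fintype.card ι + 2) * ∫ x, x i ^ 2 * x j ^ 2 ∂U =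
      if i = j then 3 else 1 := by
  have hmixed (j : ι) : 3 * ∫ x, x i ^ 2 * x j ^ 2 ∂U =
      (if i = j then 3 else 1) * ∫ x, x i ^ 4 ∂U := by
    split_ifs with hij
    · subst hij
      simp only [← pow_add]
    · have := hU.integral_coord_pow_four_add hij
      rw [hU.integral_coord_pow_eq 4 j i] at this
      linarith
  have hsum : ∑ j, ∫ x, x i ^ 2 * x j ^ 2 ∂U = ∫ x, x i ^ 2 ∂U := by
    rw [← integral_finsetSum _ fun j _ ↦ hU.integrable_of_continuous (by fun_prop)]
    refine integral_congr_ae (hU.ae_sum_sq_eq_one.mono fun x hx ↦ ?_)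
    simp only [← Finset.mul_sum, hx, mul_one]
  have hcount : ∑ j, (if i = j then (3 : ℝ) else 1) = Fintype.card ι + 2 := by
    have (j : ι) : (if i = j then (3 : ℝ) else 1) = 1 + if i = j then 2 else 0 := by
      split_ifs <;> norm_num
    simp [this, Finset.sum_add_distrib]
  have hfour : 3 * ∫ x, x i ^ 2 ∂U = (Fintype.card ι + 2) * ∫ x, x i ^ 4 ∂U := by
    rw [← hsum, Finset.mul_sum, ← hcount, Finset.sum_mul]
    exact Finset.sum_congr rfl fun j _ ↦ hmixed j
  linear_combination (Fintype.card ι * (Fintype.card ι + 2) / 3 : ℝ) * hmixed j -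
    (Fintype.card ι * (if i = j then 3 else 1) / 3 : ℝ) * hfour +
    (if i = j then 3 else 1) * hU.card_mul_integral_coord_sq i

lemma card_mul_integral_quadraticForm (hU : IsSphereUniform U) {A : Matrix ι ι ℝ}
    (hA : A.IsHermitian) : Fintype.card ι * ∫ x, x ⬝ᵥ A *ᵥ x ∂U = A.trace := by
  rw [hU.integral_comp_quadraticForm hA (g := fun r ↦ r) continuous_id,
    integral_finsetSum _ fun i _ ↦ hU.integrable_of_continuous (by fun_prop), Finset.mul_sum,
    hA.trace_eq_sum_eigenvalues]
  refine Finset.sum_congr rfl fun i _ ↦ ?_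
  rw [integral_const_mul, mul_left_comm, hU.card_mul_integral_coord_sq, mul_one]
  rfl

lemma card_mul_integral_sum_mul_coord_sq_sq (hU : IsSphereUniform U) (l : ι → ℝ) :
    Fintype.card ι * (Fintype.card ι + 2) * ∫ x, (∑ i, l i * x i ^ 2) ^ 2 ∂U =
      (∑ i, l i) ^ 2 + 2 * ∑ i, l i ^ 2 := by
  have hexp (x : ι → ℝ) :
      (∑ i, l i * x i ^ 2) ^ 2 = ∑ i, ∑ j, l i * l j * (x i ^ 2 * x j ^ 2) := by
    rw [sq, Finset.sum_mul_sum]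
    exact Finset.sum_congr rfl fun i _ ↦ Finset.sum_congr rfl fun j _ ↦ mul_mul_mul_comm ..
  calc Fintype.card ι * (Fintype.card ι + 2) * ∫ x, (∑ i, l i * x i ^ 2) ^ 2 ∂U
    _ = ∑ i, ∑ j, l i * l j *
          (Fintype.card ι * (Fintype.card ι + 2) * ∫ x, x i ^ 2 * x j ^ 2 ∂U) := by
      simp_rw [hexp]
      rw [integral_finsetSum _ fun i _ ↦ hU.integrable_of_continuous (by fun_prop),
        Finset.mul_sum]
      congr! 1 with i
      rw [integral_finsetSum _ fun j _ ↦ hU.integrable_of_continuous (by fun_prop),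
        Finset.mul_sum]
      congr! 1 with j
      rw [integral_const_mul, mul_left_comm]
    _ = ∑ i, ∑ j, (l i * l j + if i = j then 2 * l i ^ 2 else 0) := by
      simp_rw [hU.card_mul_integral_coord_sq_mul_coord_sq]
      congr! 2 with i _ j _
      split_ifs with hij
      · rw [hij]
        ring
      · ring
    _ = (∑ i, l i) ^ 2 + 2 * ∑ i, l i ^ 2 := by
      rw [sq (∑ i, l i), Finset.sum_mul_sum]
      simp [Finset.sum_add_distrib, Finset.mul_sum]

lemma card_mul_integral_quadraticForm_sq (hU : IsSphereUniform U) {A : Matrix ι ι ℝ}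
    (hA : A.IsHermitian) :
    Fintype.card ι * (Fintype.card ι + 2) * ∫ x, (x ⬝ᵥ A *ᵥ x) ^ 2 ∂U =
      A.trace ^ 2 + 2 * (A * A).trace := by
  rw [hU.integral_comp_quadraticForm hA (g := fun r ↦ r ^ 2) (by fun_prop),
    trace_mul_self_eq_sum_eigenvalues_sq hA, hA.trace_eq_sum_eigenvalues]
  exact hU.card_mul_integral_sum_mul_coord_sq_sq hA.eigenvalues

end IsSphereUniform

end UniformSphere

section GaussianDensity

open scoped RealInnerProductSpace
open Module

variable (E : Type*) [NormedAddCommGroup E] [InnerProductSpace ℝ E] [FiniteDimensional ℝ E]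
  [MeasurableSpace E] [BorelSpace E]

lemma integral_gaussian_mul_cexp_inner (t : E) :
    ∫ y : E, (exp (-‖y‖ ^ 2 / 2) : ℂ) * Complex.exp (⟪y, t⟫ * Complex.I) =
      (∫ y : E, exp (-‖y‖ ^ 2 / 2) : ℝ) * Complex.exp (-‖t‖ ^ 2 / 2) := by
  have h1 := GaussianFourier.integral_cexp_neg_mul_sq_norm_add (V := E) (b := 1 / 2)
    (by norm_num) Complex.I t
  have h0 := GaussianFourier.integral_cexp_neg_mul_sq_norm_add (V := E) (b := 1 / 2)
    (by norm_num) 0 t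
  have e0 : ((∫ y : E, exp (-‖y‖ ^ 2 / 2) : ℝ) : ℂ) = (π / (1 / 2)) ^ (finrank ℝ E / 2 : ℂ) := by
    rw [← integral_complex_ofReal]
    simp only [zero_mul, add_zero, ne_eq, OfNat.ofNat_ne_zero, not_false_eq_true, zero_pow,
      zero_div, Complex.exp_zero, mul_one] at h0
    rw [← h0]
    congr with y
    push_cast
    ring_nf
  rw [e0]
  convert h1 using 1
  · congr with y
    push_cast
    rw [← Complex.exp_add, real_inner_comm]
    ring_nf
  · rw [Complex.I_sq]
    ring_nf

lemma integrable_exp_neg_sq_norm_div_two : Integrable fun y : E ↦ exp (-‖y‖ ^ 2 / 2) := by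
  have h := (GaussianFourier.integrable_cexp_neg_mul_sq_norm_add (V := E) (b := 1 / 2)
    (by norm_num) 0 0).re
  refine h.congr (.of_forall fun y ↦ ?_)
  have : (-(1 / 2) * (‖y‖ : ℂ) ^ 2 + 0 * ((⟪(0 : E), y⟫ : ℝ) : ℂ)) =
    ((-‖y‖ ^ 2 / 2 : ℝ) : ℂ) := by
    push_cast
    ring
  simp only [this, ← Complex.ofReal_exp, RCLike.re_eq_complex_re, Complex.ofReal_re]

lemma integral_exp_neg_sq_norm_div_two_pos : 0 < ∫ y : E, exp (-‖y‖ ^ 2 / 2) :=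
  integral_exp_pos (integrable_exp_neg_sq_norm_div_two E)

lemma stdGaussian_eq_withDensity : stdGaussian E = (volume : Measure E).withDensity
    fun y ↦ ENNReal.ofReal (exp (-‖y‖ ^ 2 / 2) / ∫ z : E, exp (-‖z‖ ^ 2 / 2)) := by
  have hZ := integral_exp_neg_sq_norm_div_two_pos E
  have : IsFiniteMeasure ((volume : Measure E).withDensity
      fun y ↦ ENNReal.ofReal (exp (-‖y‖ ^ 2 / 2) / ∫ z : E, exp (-‖z‖ ^ 2 / 2))) :=
    isFiniteMeasure_withDensity_ofReal
      ((integrable_exp_neg_sq_norm_div_two E).div_const _).hasFiniteIntegral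
  refine Measure.ext_of_charFun (funext fun t ↦ ?_)
  rw [charFun_stdGaussian, charFun_apply, integral_withDensity_eq_integral_toReal_smul
    (by fun_prop) (.of_forall fun _ ↦ ENNReal.ofReal_lt_top)]
  have hne : ((∫ y : E, exp (-‖y‖ ^ 2 / 2) : ℝ) : ℂ) ≠ 0 := by exact_mod_cast hZ.ne'
  rw [← mul_right_inj' hne, ← integral_gaussian_mul_cexp_inner, ← integral_const_mul]
  congr with y
  rw [ENNReal.toReal_ofReal (by positivity), Complex.real_smul, Complex.ofReal_div, ← mul_assoc,
    mul_div_cancel₀ _ hne]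

lemma stdGaussian_absolutelyContinuous : stdGaussian E ≪ volume := by
  rw [stdGaussian_eq_withDensity]
  exact withDensity_absolutelyContinuous _ _

lemma stdGaussian_real_eq {C : Set E} (hC : MeasurableSet C) : (stdGaussian E).real C =
    (∫ y, C.indicator 1 y * exp (-‖y‖ ^ 2 / 2)) / ∫ y : E, exp (-‖y‖ ^ 2 / 2) := by
  have hZ := integral_exp_neg_sq_norm_div_two_pos E
  rw [← integral_indicator_one hC]
  conv_lhs => rw [stdGaussian_eq_withDensity]
  rw [integral_withDensity_eq_integral_toReal_smul
    (by fun_prop) (.of_forall fun _ ↦ ENNReal.ofReal_lt_top), ← integral_div]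
  congr with y
  rw [ENNReal.toReal_ofReal (by positivity), smul_eq_mul]
  ring

end GaussianDensity

section CentralLimit

open scoped RealInnerProductSpace

variable {Ω E : Type*} [MeasurableSpace Ω] [NormedAddCommGroup E] [InnerProductSpace ℝ E]
  {f : Ω → E}

/-- The normalised sum `n^{-1/2} ∑ᵢ f(ωᵢ)` of the values of `f` along a sample `ω` of size `n`. -/
def normalizedSum (f : Ω → E) (n : ℕ) (ω : Fin n → Ω) : E :=
  (√n)⁻¹ • ∑ i, f (ω i)

variable [MeasurableSpace E] [BorelSpace E] [FiniteDimensional ℝ E]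

lemma measurable_normalizedSum (hf : Measurable f) (n : ℕ) : Measurable (normalizedSum f n) := by
  unfold normalizedSum
  fun_prop

variable {P : Measure Ω}

lemma charFun_map_inner (hf : Measurable f) (u : E) (s : ℝ) :
    charFun (P.map fun ω ↦ ⟪f ω, u⟫) s = charFun (P.map f) (s • u) := by
  rw [charFun_apply_real, charFun_apply, integral_map (by fun_prop) (by fun_prop),
    integral_map hf.aemeasurable (by fun_prop)]
  simp only [real_inner_smul_right, Complex.ofReal_mul]

variable [IsProbabilityMeasure P]

lemma charFun_map_normalizedSum (hf : Measurable f) (n : ℕ) (t : E) :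
    charFun ((Measure.pi fun _ : Fin n ↦ P).map (normalizedSum f n)) t =
      charFun (P.map f) ((√n)⁻¹ • t) ^ n := by
  have hmap (i : Fin n) : (Measure.pi fun _ : Fin n ↦ P).map (fun ω ↦ f (ω i)) = P.map f := by
    conv_rhs => rw [← (measurePreserving_eval (fun _ : Fin n ↦ P) i).map_eq]
    rw [Measure.map_map hf (measurable_pi_apply i)]
    rfl
  have hindep := iIndepFun_pi (μ := fun _ : Fin n ↦ P) (X := fun _ ↦ f) fun _ ↦ hf.aemeasurable
  unfold normalizedSum
  have hfi (i : Fin n) : Measurable fun ω : Fin n → Ω ↦ f (ω i) := by fun_prop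
  rw [charFun_map_smul_comp (Finset.aemeasurable_fun_sum _ fun i _ ↦ (hfi i).aemeasurable),
    hindep.charFun_map_fun_sum_eq_prod fun i ↦ (hfi i).aemeasurable]
  simp [hmap]

theorem tendstoInDistribution_normalizedSum (hf : Measurable f)
    (hmean : ∀ t, ∫ ω, ⟪f ω, t⟫ ∂P = 0) (hvar : ∀ t, ∫ ω, ⟪f ω, t⟫ ^ 2 ∂P = ‖t‖ ^ 2) :
    TendstoInDistribution (normalizedSum f) atTop id (fun n ↦ Measure.pi fun _ : Fin n ↦ P)
      (stdGaussian E) where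
  forall_aemeasurable n := (measurable_normalizedSum hf n).aemeasurable
  tendsto := by
    refine ProbabilityMeasure.tendsto_of_tendsto_charFun fun t ↦ ?_
    rcases eq_or_ne t 0 with rfl | ht
    · have := Measure.isProbabilityMeasure_map (μ := P) hf.aemeasurable
      simp [charFun_map_normalizedSum hf]
    set u := ‖t‖⁻¹ • t with hu
    have hut : ‖t‖ • u = t := by rw [hu, smul_inv_smul₀ (norm_ne_zero_iff.2 ht)]
    have hX : Measurable fun ω ↦ ⟪f ω, u⟫ := by fun_prop
    have hunit : ‖u‖ ^ 2 = 1 := by simp [hu, norm_smul, ht]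
    have := tendsto_charFun_inv_sqrt_mul_pow hX.aemeasurable (hmean u)
      ((hvar u).trans hunit) ‖t‖
    simpa [charFun_map_inner hf, mul_smul, hut, charFun_map_normalizedSum hf, charFun_stdGaussian]
      using this

theorem tendsto_measure_normalizedSum_preimage_of_convex (hf : Measurable f)
    (hmean : ∀ t, ∫ ω, ⟪f ω, t⟫ ∂P = 0) (hvar : ∀ t, ∫ ω, ⟪f ω, t⟫ ^ 2 ∂P = ‖t‖ ^ 2)
    {C : Set E} (hC : Convex ℝ C) (hCm : MeasurableSet C) :
    Tendsto (fun n ↦ ((Measure.pi fun _ : Fin n ↦ P) (normalizedSum f n ⁻¹' C)).toReal) atTop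
      (𝓝 ((stdGaussian E).real C)) := by
  have hfrontier : (stdGaussian E).map id (frontier C) = 0 := by
    rw [Measure.map_id]
    exact stdGaussian_absolutelyContinuous E (hC.addHaar_frontier volume)
  have := ProbabilityMeasure.tendsto_measure_of_null_frontier_of_tendsto'
    (tendstoInDistribution_normalizedSum hf hmean hvar).tendsto hfrontier
  simp only [ProbabilityMeasure.coe_mk, Measure.map_id,
    Measure.map_apply (measurable_normalizedSum hf _) hCm] at this
  exact (ENNReal.tendsto_toReal (measure_ne_top _ C)).comp this

end CentralLimit

section PolarCoordinates

open Metric Module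

variable {E : Type*} [NormedAddCommGroup E] [NormedSpace ℝ E]

lemma homogeneous_smul_mul_gaussian {g : E → ℝ} {k : ℕ}
    (hg : ∀ r : ℝ, ∀ y, g (r • y) = r ^ k * g y) (p : sphere (0 : E) 1 × Set.Ioi (0 : ℝ)) :
    g (p.2.1 • p.1.1) * exp (-‖p.2.1 • p.1.1‖ ^ 2 / 2) =
      g p.1.1 * (p.2.1 ^ k * exp (-p.2.1 ^ 2 / 2)) := by
  rw [hg, norm_smul, norm_eq_of_mem_sphere, mul_one, norm_eq_abs, sq_abs]
  ring

variable [FiniteDimensional ℝ E] [MeasurableSpace E] [BorelSpace E] [Nontrivial E]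
  (μ : Measure E) [μ.IsAddHaarMeasure]

lemma integral_eq_integral_toSphere_prod (F : E → ℝ) :
    ∫ y, F y ∂μ =
      ∫ p, F (p.2.1 • p.1.1) ∂(μ.toSphere.prod (.volumeIoiPow (finrank ℝ E - 1))) := by
  rw [← μ.measurePreserving_homeomorphUnitSphereProd.integral_comp
    (Homeomorph.measurableEmbedding _)]
  conv_lhs => rw [← MeasureTheory.restrict_compl_singleton (μ := μ) (0 : E),
    ← integral_subtype_comap (measurableSet_singleton _).compl]
  refine integral_congr_ae (.of_forall fun x ↦ ?_)
  simp only [← homeomorphUnitSphereProd_symm_apply_coe, Homeomorph.symm_apply_apply]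

lemma integrable_iff_integrable_toSphere_prod (F : E → ℝ) :
    Integrable F μ ↔ Integrable (fun p ↦ F (p.2.1 • p.1.1))
      (μ.toSphere.prod (.volumeIoiPow (finrank ℝ E - 1))) := by
  rw [← μ.measurePreserving_homeomorphUnitSphereProd.integrable_comp_emb
    (Homeomorph.measurableEmbedding _)]
  conv_lhs => rw [← MeasureTheory.restrict_compl_singleton (μ := μ) (0 : E), ← IntegrableOn,
    integrableOn_iff_comap_subtypeVal (measurableSet_singleton _).compl]
  refine integrable_congr (.of_forall fun x ↦ ?_)
  simp only [Function.comp_def, ← homeomorphUnitSphereProd_symm_apply_coe,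
    Homeomorph.symm_apply_apply]

lemma integral_volumeIoiPow (n : ℕ) (h : ℝ → ℝ) :
    ∫ r, h r ∂(Measure.volumeIoiPow n) = ∫ r in Set.Ioi 0, r ^ n * h r := by
  simp only [Measure.volumeIoiPow, ENNReal.ofReal]
  rw [integral_withDensity_eq_integral_smul,
    integral_subtype_comap measurableSet_Ioi fun a ↦ Real.toNNReal (a ^ n) • h a,
    setIntegral_congr_fun measurableSet_Ioi fun x hx ↦ ?_]
  · rw [NNReal.smul_def, Real.coe_toNNReal _ (pow_nonneg hx.out.le _), smul_eq_mul]
  · exact (measurable_subtype_coe.pow_const _).real_toNNReal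

lemma integrable_volumeIoiPow_iff (n : ℕ) (h : ℝ → ℝ) :
    Integrable (fun r : Set.Ioi (0 : ℝ) ↦ h r) (Measure.volumeIoiPow n) ↔
      IntegrableOn (fun r ↦ r ^ n * h r) (Set.Ioi 0) := by
  simp only [Measure.volumeIoiPow, ENNReal.ofReal]
  rw [integrable_withDensity_iff_integrable_smul,
    integrableOn_iff_comap_subtypeVal measurableSet_Ioi]
  · refine integrable_congr (.of_forall fun x ↦ ?_)
    simp [NNReal.smul_def, Real.coe_toNNReal _ (pow_nonneg x.2.out.le _)]
  · exact (measurable_subtype_coe.pow_const _).real_toNNReal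

/-- The absolute moments of the half-line Gaussian weight. -/
def gaussianRadialMoment (k : ℕ) : ℝ := ∫ r in Set.Ioi (0 : ℝ), r ^ k * exp (-r ^ 2 / 2)

lemma integrableOn_pow_mul_exp_neg_sq_div_two (k : ℕ) :
    IntegrableOn (fun r : ℝ ↦ r ^ k * exp (-r ^ 2 / 2)) (Set.Ioi 0) := by
  have h := integrableOn_rpow_mul_exp_neg_mul_sq (b := 1 / 2) (by norm_num) (s := k)
    (by have := k.cast_nonneg (α := ℝ); linarith)
  refine h.congr_fun (fun r _ ↦ ?_) measurableSet_Ioi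
  simp only [rpow_natCast]
  ring_nf

lemma gaussianRadialMoment_eq (k : ℕ) : gaussianRadialMoment k =
    (1 / 2 : ℝ) ^ (-((k : ℝ) + 1) / 2) * (1 / 2) * Gamma (((k : ℝ) + 1) / 2) := by
  have := k.cast_nonneg (α := ℝ)
  rw [← integral_rpow_mul_exp_neg_mul_rpow (p := 2) (q := k) (b := 1 / 2) (by norm_num)
    (by linarith) (by norm_num), gaussianRadialMoment]
  refine setIntegral_congr_fun measurableSet_Ioi fun r _ ↦ ?_
  simp only [rpow_natCast, rpow_two]
  ring_nf

lemma gaussianRadialMoment_pos (k : ℕ) : 0 < gaussianRadialMoment k := by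
  rw [gaussianRadialMoment_eq]
  have : 0 < Gamma (((k : ℝ) + 1) / 2) := Gamma_pos_of_pos (by positivity)
  positivity

lemma gaussianRadialMoment_add_two (k : ℕ) :
    gaussianRadialMoment (k + 2) = (k + 1) * gaussianRadialMoment k := by
  rw [gaussianRadialMoment_eq, gaussianRadialMoment_eq]
  have h1 : (((k + 2 : ℕ) : ℝ) + 1) / 2 = ((k : ℝ) + 1) / 2 + 1 := by push_cast; ring
  have h2 : -(((k + 2 : ℕ) : ℝ) + 1) / 2 = -((k : ℝ) + 1) / 2 + (-1 : ℝ) := by push_cast; ring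
  rw [h1, h2, Gamma_add_one (by positivity), rpow_add (by norm_num), rpow_neg_one]
  ring

variable {μ}

lemma integrable_homogeneous_mul_gaussian {g : E → ℝ} {k : ℕ} (hc : Continuous g)
    (hg : ∀ r : ℝ, ∀ y, g (r • y) = r ^ k * g y) :
    Integrable (fun y ↦ g y * exp (-‖y‖ ^ 2 / 2)) μ := by
  rw [integrable_iff_integrable_toSphere_prod]
  simp only [homogeneous_smul_mul_gaussian hg]
  refine Integrable.mul_prod (f := fun x : sphere (0 : E) 1 ↦ g x)
    (g := fun r : Set.Ioi (0 : ℝ) ↦ r.1 ^ k * exp (-r.1 ^ 2 / 2)) ?_ ?_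
  · exact (hc.comp continuous_subtype_val).integrable_of_hasCompactSupport
      (HasCompactSupport.of_compactSpace _)
  · rw [integrable_volumeIoiPow_iff _ fun r ↦ r ^ k * exp (-r ^ 2 / 2)]
    refine (integrableOn_pow_mul_exp_neg_sq_div_two (finrank ℝ E - 1 + k)).congr_fun
      (fun r _ ↦ ?_) measurableSet_Ioi
    simp only [pow_add, mul_assoc]

lemma integral_homogeneous_mul_gaussian {g : E → ℝ} {k : ℕ}
    (hg : ∀ r : ℝ, ∀ y, g (r • y) = r ^ k * g y) :
    ∫ y, g y * exp (-‖y‖ ^ 2 / 2) ∂μ =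
      (∫ x, g x.1 ∂μ.toSphere) * gaussianRadialMoment (finrank ℝ E - 1 + k) := by
  rw [integral_eq_integral_toSphere_prod]
  simp only [homogeneous_smul_mul_gaussian hg]
  rw [integral_prod_mul (fun x : sphere (0 : E) 1 ↦ g x)
    (fun r : Set.Ioi (0 : ℝ) ↦ r.1 ^ k * exp (-r.1 ^ 2 / 2)),
    integral_volumeIoiPow _ fun r ↦ r ^ k * exp (-r ^ 2 / 2), gaussianRadialMoment]
  simp only [pow_add, mul_assoc]

end PolarCoordinates

section HomogeneousPolynomials

open Metric Module MvPolynomial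

variable {ι : Type*}

lemma eval_smul_of_isHomogeneous {P : MvPolynomial ι ℝ} {d : ℕ} (hP : P.IsHomogeneous d) (r : ℝ)
    (y : ι → ℝ) : eval (r • y) P = r ^ d * eval y P := by
  rw [eval_eq, eval_eq, Finset.mul_sum]
  refine Finset.sum_congr rfl fun m hm ↦ ?_
  have hdeg : ∑ i ∈ m.support, m i = d := by
    rw [← Finsupp.degree_apply, Finsupp.degree_eq_weight_one]
    exact hP (mem_support_iff.1 hm)
  simp only [Pi.smul_apply, smul_eq_mul, mul_pow, Finset.prod_mul_distrib,
    Finset.prod_pow_eq_pow_sum, hdeg]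
  ring

lemma continuous_eval_euclidean (P : MvPolynomial ι ℝ) :
    Continuous fun y : EuclideanSpace ℝ ι ↦ eval y P :=
  P.continuous_eval.comp (PiLp.continuous_ofLp 2 _)

lemma hasLineDerivAt_eval [DecidableEq ι] (P : MvPolynomial ι ℝ) (y : EuclideanSpace ℝ ι) (i : ι) :
    HasLineDerivAt ℝ (fun y : EuclideanSpace ℝ ι ↦ eval y P) (eval y (pderiv i P)) y
      (EuclideanSpace.single i 1) := by
  unfold HasLineDerivAt
  induction P using MvPolynomial.induction_on with
  | C a => simpa using hasDerivAt_const (0 : ℝ) a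
  | add P Q hP hQ => simpa using hP.fun_add hQ
  | mul_X P j hP =>
    have hX : HasDerivAt (fun t : ℝ ↦ (y + t • EuclideanSpace.single i (1 : ℝ)) j)
        (eval y (pderiv i (X j))) 0 := by
      rcases eq_or_ne j i with rfl | hj
      · simpa using (hasDerivAt_id' (0 : ℝ)).const_add (y j)
      · simpa [hj, pderiv_X_of_ne] using hasDerivAt_const (0 : ℝ) (y j)
    simpa only [pderiv_mul, map_add, map_mul, eval_X, zero_smul, add_zero] using hP.fun_mul hX

lemma hasLineDerivAt_exp_neg_sq_norm_div_two {E : Type*} [NormedAddCommGroup E]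
    [InnerProductSpace ℝ E] (y v : E) :
    HasLineDerivAt ℝ (fun y ↦ exp (-‖y‖ ^ 2 / 2)) (-(inner ℝ y v * exp (-‖y‖ ^ 2 / 2))) y v := by
  have h := ((hasStrictFDerivAt_norm_sq y).hasFDerivAt.const_mul (-1 / 2)).exp.hasLineDerivAt v
  convert! h using 1
  · ext z
    ring_nf
  · simp
    ring_nf

variable [Fintype ι]

/-- The Laplacian of a polynomial, as a polynomial. -/
def polyLaplacian (P : MvPolynomial ι ℝ) : MvPolynomial ι ℝ :=
  ∑ i, pderiv i (pderiv i P)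

lemma polyLaplacian_pow_add_two (P : MvPolynomial ι ℝ) (j : ℕ) :
    polyLaplacian (P ^ (j + 2)) = (j + 2) * (j + 1) * P ^ j * ∑ i, pderiv i P ^ 2 +
      (j + 2) * P ^ (j + 1) * polyLaplacian P := by
  simp only [polyLaplacian, Finset.mul_sum, ← Finset.sum_add_distrib]
  refine Finset.sum_congr rfl fun i _ ↦ ?_
  simp only [pderiv_pow, pderiv_mul, Derivation.map_natCast]
  push_cast
  ring

lemma isHomogeneous_polyLaplacian {P : MvPolynomial ι ℝ} {d : ℕ} (hP : P.IsHomogeneous (d + 2)) :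
    (polyLaplacian P).IsHomogeneous d :=
  .sum _ _ _ fun _ _ ↦ hP.pderiv.pderiv

variable [Nonempty ι]

lemma integrable_eval_mul_gaussian (P : MvPolynomial ι ℝ) :
    Integrable fun y : EuclideanSpace ℝ ι ↦ eval y P * exp (-‖y‖ ^ 2 / 2) := by
  induction P using MvPolynomial.induction_on' with
  | monomial m a =>
    exact integrable_homogeneous_mul_gaussian (continuous_eval_euclidean _) fun r y ↦
      eval_smul_of_isHomogeneous (isHomogeneous_monomial a rfl) r y
  | add P Q hP hQ => simpa only [map_add, add_mul] using hP.fun_add hQ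

/-- Gaussian integration by parts, also known as Stein's identity. -/
lemma integral_eval_X_mul_mul_gaussian (P : MvPolynomial ι ℝ) (i : ι) :
    ∫ y : EuclideanSpace ℝ ι, eval y (X i * P) * exp (-‖y‖ ^ 2 / 2) =
      ∫ y : EuclideanSpace ℝ ι, eval y (pderiv i P) * exp (-‖y‖ ^ 2 / 2) := by
  classical
  have hXP (y : EuclideanSpace ℝ ι) : eval y P * -(inner ℝ y (EuclideanSpace.single i 1) *
      exp (-‖y‖ ^ 2 / 2)) = -(eval y (X i * P) * exp (-‖y‖ ^ 2 / 2)) := by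
    simp [EuclideanSpace.inner_single_right]
    ring
  have key := integral_bilinear_hasLineDerivAt_right_eq_neg_left_of_integrable
    (μ := volume) (B := ContinuousLinearMap.mul ℝ ℝ) (integrable_eval_mul_gaussian (pderiv i P))
    (by simpa only [ContinuousLinearMap.mul_apply', hXP] using
      (integrable_eval_mul_gaussian (X i * P)).fun_neg)
    (integrable_eval_mul_gaussian P)
    (fun y _ ↦ hasLineDerivAt_eval P y i) (fun y _ ↦ hasLineDerivAt_exp_neg_sq_norm_div_two y _)
  simpa only [ContinuousLinearMap.mul_apply', hXP, integral_neg, neg_inj] using key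

lemma mul_integral_eval_mul_gaussian {P : MvPolynomial ι ℝ} {d : ℕ} (hP : P.IsHomogeneous d) :
    d * ∫ y : EuclideanSpace ℝ ι, eval y P * exp (-‖y‖ ^ 2 / 2) =
      ∫ y : EuclideanSpace ℝ ι, eval y (polyLaplacian P) * exp (-‖y‖ ^ 2 / 2) := by
  calc d * ∫ y : EuclideanSpace ℝ ι, eval y P * exp (-‖y‖ ^ 2 / 2)
    _ = ∫ y : EuclideanSpace ℝ ι, ∑ i, eval y (X i * pderiv i P) * exp (-‖y‖ ^ 2 / 2) := by
      rw [← integral_const_mul]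
      congr with y
      rw [← Finset.sum_mul, ← map_sum, hP.sum_X_mul_pderiv, nsmul_eq_mul, map_mul, map_natCast,
        mul_assoc]
    _ = ∑ i, ∫ y : EuclideanSpace ℝ ι, eval y (pderiv i (pderiv i P)) * exp (-‖y‖ ^ 2 / 2) := by
      rw [integral_finsetSum _ fun i _ ↦ integrable_eval_mul_gaussian _]
      simp only [integral_eval_X_mul_mul_gaussian]
    _ = ∫ y : EuclideanSpace ℝ ι, eval y (polyLaplacian P) * exp (-‖y‖ ^ 2 / 2) := by
      rw [← integral_finsetSum _ fun i _ ↦ integrable_eval_mul_gaussian _]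
      simp only [polyLaplacian, map_sum, Finset.sum_mul]

variable (ι) in
/-- The surface measure of the unit sphere of `ℝ^ι`. -/
abbrev sphereMeasure : Measure (sphere (0 : EuclideanSpace ℝ ι) 1) := volume.toSphere

lemma integral_eval_mul_gaussian {P : MvPolynomial ι ℝ} {d : ℕ} (hP : P.IsHomogeneous d) :
    ∫ y : EuclideanSpace ℝ ι, eval y P * exp (-‖y‖ ^ 2 / 2) =
      (∫ x, eval x.1 P ∂sphereMeasure ι) * gaussianRadialMoment (Fintype.card ι - 1 + d) := by
  rw [integral_homogeneous_mul_gaussian (E := EuclideanSpace ℝ ι) (g := fun y ↦ eval y P)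
    fun r y ↦ eval_smul_of_isHomogeneous hP r y, finrank_euclideanSpace]

lemma mul_integral_sphere_eval {P : MvPolynomial ι ℝ} {d : ℕ} (hP : P.IsHomogeneous (d + 2)) :
    (d + 2) * (d + Fintype.card ι) * ∫ x, eval x.1 P ∂sphereMeasure ι =
      ∫ x, eval x.1 (polyLaplacian P) ∂sphereMeasure ι := by
  have hcard : Fintype.card ι - 1 + (d + 2) = (Fintype.card ι - 1 + d) + 2 := by omega
  have hcard' : ((Fintype.card ι - 1 + d : ℕ) : ℝ) + 1 = d + Fintype.card ι := by
    have := Fintype.card_pos (α := ι)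
    rw [Nat.cast_add, Nat.cast_sub this]
    ring
  have key := mul_integral_eval_mul_gaussian hP
  rw [integral_eval_mul_gaussian hP, integral_eval_mul_gaussian (isHomogeneous_polyLaplacian hP),
    hcard, gaussianRadialMoment_add_two, hcard'] at key
  refine mul_right_cancel₀ (gaussianRadialMoment_pos (Fintype.card ι - 1 + d)).ne' ?_
  rw [← key]
  push_cast
  ring

lemma integral_sphere_eval_eq_zero {P : MvPolynomial ι ℝ} {d : ℕ} (hP : P.IsHomogeneous d)
    (hd : d ≠ 0) (hharm : polyLaplacian P = 0) : ∫ x, eval x.1 P ∂sphereMeasure ι = 0 := by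
  have key := mul_integral_eval_mul_gaussian hP
  simpa [hharm, integral_eval_mul_gaussian hP, hd, (gaussianRadialMoment_pos _).ne'] using key

end HomogeneousPolynomials

section CartanMunzner

open Metric MvPolynomial

variable {ι : Type*} [Fintype ι]

/-- Harmonic Cartan–Münzner polynomials of degree `g`: they cut out the isoparametric families of
hypersurfaces of the sphere with `g` principal curvatures, all of the same multiplicity. -/
structure IsCartanMunzner (P : MvPolynomial ι ℝ) (g : ℕ) : Prop where
  degree_ne_zero : g ≠ 0
  isHomogeneous : P.IsHomogeneous g
  polyLaplacian_eq_zero : polyLaplacian P = 0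
  sum_pderiv_sq : ∑ i, pderiv i P ^ 2 = C ((g : ℝ) ^ 2) * (∑ i, X i ^ 2) ^ (g - 1)

namespace IsCartanMunzner

variable {P : MvPolynomial ι ℝ} {g : ℕ}

lemma eval_polyLaplacian_pow_add_two (hP : IsCartanMunzner P g) (j : ℕ)
    (x : sphere (0 : EuclideanSpace ℝ ι) 1) : eval x.1 (polyLaplacian (P ^ (j + 2))) =
      (j + 2) * (j + 1) * g ^ 2 * eval x.1 P ^ j := by
  have hx : ∑ i, x.1 i ^ 2 = 1 := by
    rw [← EuclideanSpace.real_norm_sq_eq, norm_eq_of_mem_sphere, one_pow]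
  rw [polyLaplacian_pow_add_two, hP.polyLaplacian_eq_zero, hP.sum_pderiv_sq]
  simp [hx]
  ring

/-- The squared norm of the gradient is `g ^ 2` on the sphere, so there the Laplacian of
`P ^ (j + 2)` is a multiple of `P ^ j`. -/
lemma mul_integral_sphere_pow_add_two [Nonempty ι] (hP : IsCartanMunzner P g) (j : ℕ) :
    (g * (j + 2) + Fintype.card ι - 2) * ∫ x, eval x.1 P ^ (j + 2) ∂sphereMeasure ι =
      g * (j + 1) * ∫ x, eval x.1 P ^ j ∂sphereMeasure ι := by
  have hg := Nat.pos_of_ne_zero hP.degree_ne_zero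
  obtain ⟨d, hd⟩ : ∃ d, g * (j + 2) = d + 2 := Nat.exists_eq_add_of_le' (by nlinarith)
  have hd' : (d : ℝ) = g * (j + 2) - 2 := eq_sub_of_add_eq (by exact_mod_cast hd.symm)
  have key := mul_integral_sphere_eval (hd ▸ hP.isHomogeneous.pow (j + 2))
  simp only [hP.eval_polyLaplacian_pow_add_two, map_pow, integral_const_mul, hd'] at key
  have hne : (g : ℝ) * (j + 2) ≠ 0 := by positivity
  refine mul_left_cancel₀ hne ?_
  linear_combination key

end IsCartanMunzner

end CartanMunzner

section MomentDetermined

open Polynomial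

lemma integrable_of_measure_compl_Icc_eq_zero {μ : Measure ℝ} [IsFiniteMeasure μ] {a b : ℝ}
    (hμ : μ (Set.Icc a b)ᶜ = 0) {f : ℝ → ℝ} (hf : Continuous f) : Integrable f μ := by
  obtain ⟨C, hC⟩ := isCompact_Icc.exists_bound_of_continuousOn (hf.continuousOn (s := Set.Icc a b))
  refine .of_bound hf.aestronglyMeasurable C ?_
  filter_upwards [mem_ae_iff.2 hμ] with x hx using hC x hx

lemma integral_eval_eq_of_forall_integral_pow_eq {μ ν : Measure ℝ}
    (hμ : ∀ n : ℕ, Integrable (fun x ↦ x ^ n) μ) (hν : ∀ n : ℕ, Integrable (fun x ↦ x ^ n) ν)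
    (h : ∀ n : ℕ, ∫ x, x ^ n ∂μ = ∫ x, x ^ n ∂ν) (p : ℝ[X]) :
    ∫ x, p.eval x ∂μ = ∫ x, p.eval x ∂ν := by
  simp only [eval_eq_sum_range]
  rw [integral_finsetSum _ fun i _ ↦ (hμ i).const_mul _,
    integral_finsetSum _ fun i _ ↦ (hν i).const_mul _]
  simp only [integral_const_mul, h]

lemma abs_integral_sub_integral_le_of_Icc {μ : Measure ℝ} [IsFiniteMeasure μ] {a b ε : ℝ}
    (hμ : μ (Set.Icc a b)ᶜ = 0) {f g : ℝ → ℝ} (hf : Continuous f) (hg : Continuous g)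
    (hfg : ∀ x ∈ Set.Icc a b, |f x - g x| ≤ ε) :
    |∫ x, f x ∂μ - ∫ x, g x ∂μ| ≤ ε * μ.real Set.univ := by
  rw [← integral_sub (integrable_of_measure_compl_Icc_eq_zero hμ hf)
    (integrable_of_measure_compl_Icc_eq_zero hμ hg)]
  have hae : ∀ᵐ x ∂μ, ‖f x - g x‖ ≤ ε := by
    filter_upwards [mem_ae_iff.2 hμ] with x hx using hfg x hx
  exact norm_integral_le_of_norm_le_const hae

lemma measure_ext_of_forall_integral_pow_eq {μ ν : Measure ℝ} [IsFiniteMeasure μ]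
    [IsFiniteMeasure ν] {a b : ℝ} (hμ : μ (Set.Icc a b)ᶜ = 0) (hν : ν (Set.Icc a b)ᶜ = 0)
    (h : ∀ n : ℕ, ∫ x, x ^ n ∂μ = ∫ x, x ^ n ∂ν) : μ = ν := by
  refine ext_of_forall_integral_eq_of_IsFiniteMeasure (μ := μ) (ν := ν) fun f ↦ ?_
  refine eq_of_forall_dist_le fun ε hε ↦ ?_
  have hK : 0 < μ.real Set.univ + ν.real Set.univ + 1 := by positivity
  set δ := ε / (μ.real Set.univ + ν.real Set.univ + 1)
  obtain ⟨p, hp⟩ := exists_polynomial_near_of_continuousOn a b f f.continuous.continuousOn δ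
    (by positivity)
  have hpf (x : ℝ) (hx : x ∈ Set.Icc a b) : |p.eval x - f x| ≤ δ := (hp x hx).le
  have hpμ := abs_integral_sub_integral_le_of_Icc hμ p.continuous f.continuous hpf
  have hpν := abs_integral_sub_integral_le_of_Icc hν p.continuous f.continuous hpf
  rw [← integral_eval_eq_of_forall_integral_pow_eq
    (fun n ↦ integrable_of_measure_compl_Icc_eq_zero hμ (by fun_prop))
    (fun n ↦ integrable_of_measure_compl_Icc_eq_zero hν (by fun_prop)) h p] at hpν
  rw [abs_sub_comm] at hpμ
  calc dist (∫ x, f x ∂μ) (∫ x, f x ∂ν)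
    _ ≤ |∫ x, f x ∂μ - ∫ x, p.eval x ∂μ| + |∫ x, p.eval x ∂μ - ∫ x, f x ∂ν| := abs_sub_le _ _ _
    _ ≤ δ * μ.real Set.univ + δ * ν.real Set.univ := add_le_add hpμ hpν
    _ ≤ δ * (μ.real Set.univ + ν.real Set.univ + 1) := by
      rw [← mul_add]
      exact mul_le_mul_of_nonneg_left (by linarith) (by positivity)
    _ = ε := div_mul_cancel₀ _ hK.ne'

end MomentDetermined

namespace IsCartanMunzner

open Metric MvPolynomial

variable {ι : Type*} [Fintype ι] {P : MvPolynomial ι ℝ} {g : ℕ}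

lemma abs_eval_le_one (hP : IsCartanMunzner P g) (x : sphere (0 : EuclideanSpace ℝ ι) 1) :
    |eval x.1 P| ≤ 1 := by
  have hx : ∑ i, x.1 i ^ 2 = 1 := by
    rw [← EuclideanSpace.real_norm_sq_eq, norm_eq_of_mem_sphere, one_pow]
  have hg : (0 : ℝ) < g := Nat.cast_pos.2 (Nat.pos_of_ne_zero hP.degree_ne_zero)
  have heuler : ∑ i, x.1 i * eval x.1 (pderiv i P) = g * eval x.1 P := by
    simpa using congrArg (eval x.1) hP.isHomogeneous.sum_X_mul_pderiv
  have hgrad : ∑ i, eval x.1 (pderiv i P) ^ 2 = g ^ 2 := by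
    simpa [hx] using congrArg (eval x.1) hP.sum_pderiv_sq
  have hcs := Finset.sum_mul_sq_le_sq_mul_sq Finset.univ (x.1 ·) fun i ↦ eval x.1 (pderiv i P)
  rw [heuler, hgrad, hx, one_mul, mul_pow] at hcs
  exact (sq_le_one_iff_abs_le_one _).1 (le_of_mul_le_mul_left (by linarith) (pow_pos hg 2))

lemma integral_sphere_pow [Nonempty ι] (hP : IsCartanMunzner P g) (hcard : Fintype.card ι = g + 2)
    (n : ℕ) : ∫ x, eval x.1 P ^ n ∂sphereMeasure ι =
      (sphereMeasure ι).real Set.univ / 2 * ∫ t in (-1 : ℝ)..1, t ^ n := by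
  rw [integral_pow]
  induction n using Nat.twoStepInduction with
  | zero => simp; ring
  | one => simp [integral_sphere_eval_eq_zero hP.isHomogeneous hP.degree_ne_zero
      hP.polyLaplacian_eq_zero]
  | more n ih _ =>
    have h := hP.mul_integral_sphere_pow_add_two n
    have hg : (g : ℝ) ≠ 0 := Nat.cast_ne_zero.2 hP.degree_ne_zero
    rw [ih, hcard] at h
    have hg3 : (g : ℝ) * (n + 3) ≠ 0 := by positivity
    refine mul_left_cancel₀ hg3 ?_
    push_cast at h ⊢
    rw [show (g : ℝ) * (n + 3) = g * (n + 2) + (g + 2) - 2 by ring, h]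
    field_simp
    ring

lemma map_sphereMeasure [Nonempty ι] (hP : IsCartanMunzner P g)
    (hcard : Fintype.card ι = g + 2) : (sphereMeasure ι).map (fun x ↦ eval x.1 P) =
      ENNReal.ofReal ((sphereMeasure ι).real Set.univ / 2) • volume.restrict (Set.Icc (-1) 1) := by
  have hcont : Continuous fun x : sphere (0 : EuclideanSpace ℝ ι) 1 ↦ eval x.1 P :=
    (continuous_eval_euclidean P).comp continuous_subtype_val
  have : IsFiniteMeasure (ENNReal.ofReal ((sphereMeasure ι).real Set.univ / 2) •
      volume.restrict (Set.Icc (-1 : ℝ) 1)) := Measure.smul_finite _ ENNReal.ofReal_ne_top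
  refine measure_ext_of_forall_integral_pow_eq (a := -1) (b := 1) ?_ ?_ fun n ↦ ?_
  · rw [Measure.map_apply hcont.measurable measurableSet_Icc.compl]
    convert measure_empty (μ := sphereMeasure ι)
    exact Set.eq_empty_of_forall_notMem fun x hx ↦ hx (abs_le.1 (hP.abs_eval_le_one x))
  · simp
  · rw [integral_map hcont.aemeasurable (by fun_prop), hP.integral_sphere_pow hcard,
      integral_smul_measure, integral_Icc_eq_integral_Ioc,
      ← intervalIntegral.integral_of_le (by norm_num), ENNReal.toReal_ofReal (by positivity),
      smul_eq_mul]

lemma sphereMeasure_real_setOf_eval_le [Nonempty ι] (hP : IsCartanMunzner P g)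
    (hcard : Fintype.card ι = g + 2) (c : ℝ) : (sphereMeasure ι).real {x | eval x.1 P ≤ c} =
      (sphereMeasure ι).real Set.univ * (max (min 1 c + 1) 0 / 2) := by
  have hmeas : Measurable fun x : sphere (0 : EuclideanSpace ℝ ι) 1 ↦ eval x.1 P :=
    ((continuous_eval_euclidean P).comp continuous_subtype_val).measurable
  calc (sphereMeasure ι).real {x | eval x.1 P ≤ c}
    _ = ((sphereMeasure ι).map fun x ↦ eval x.1 P).real (Set.Iic c) :=
      (map_measureReal_apply hmeas measurableSet_Iic).symm
    _ = _ := by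
      rw [hP.map_sphereMeasure hcard, measureReal_ennreal_smul_apply,
        measureReal_restrict_apply measurableSet_Iic, Set.inter_comm, ← Set.Ici_inter_Iic,
        Set.inter_assoc, Set.Iic_inter_Iic, Set.Ici_inter_Iic, Real.volume_real_Icc,
        ENNReal.toReal_ofReal (by positivity), sub_neg_eq_add]
      ring

end IsCartanMunzner

section ExtremeEigenvalues

variable {p : ℕ} {A : Matrix (Fin p) (Fin p) ℝ}

lemma maxEig_neg (A : Matrix (Fin p) (Fin p) ℝ) : maxEig (-A) = -minEig A := by
  rw [maxEig, minEig, Real.sInf_def, neg_neg]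
  congr 1 with r
  simp [neg_mulVec, neg_eq_iff_eq_neg]

lemma maxEig_le_iff [NeZero p] {c : ℝ} :
    maxEig A ≤ c ↔ ∀ v : Fin p → ℝ, ∑ i, v i ^ 2 = 1 → v ⬝ᵥ A *ᵥ v ≤ c := by
  have hset : {r | ∃ v : Fin p → ℝ, (∑ i, v i ^ 2) = 1 ∧ r = v ⬝ᵥ A *ᵥ v} =
      (fun v ↦ v ⬝ᵥ A *ᵥ v) '' {v : Fin p → ℝ | ∑ i, v i ^ 2 = 1} := by
    ext r
    simp [eq_comm]
  have hne : {v : Fin p → ℝ | ∑ i, v i ^ 2 = 1}.Nonempty :=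
    ⟨Pi.single 0 1, by simp [Pi.single_apply]⟩
  have hcont : Continuous fun v : Fin p → ℝ ↦ v ⬝ᵥ A *ᵥ v := by fun_prop
  rw [maxEig, hset, csSup_le_iff (isCompact_setOf_sum_sq_eq_one.image hcont).bddAbove
    (hne.image _)]
  simp

lemma maxEig_smul_sub_smul_one [NeZero p] (A : Matrix (Fin p) (Fin p) ℝ) {a : ℝ} (ha : 0 < a)
    (b : ℝ) : maxEig (a • A - b • 1) = a * maxEig A - b := by
  refine eq_of_forall_ge_iff fun c ↦ ?_
  rw [sub_le_iff_le_add, ← le_div_iff₀' ha, maxEig_le_iff, maxEig_le_iff]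
  refine forall₂_congr fun v hv ↦ ?_
  have hvv : v ⬝ᵥ v = 1 := by rw [← hv]; simp [dotProduct, sq]
  rw [le_div_iff₀' ha, ← sub_le_iff_le_add]
  simp [sub_mulVec, smul_mulVec, dotProduct_sub, hvv]

lemma maxEig_le_iff_posSemidef [NeZero p] (hA : A.IsHermitian) {c : ℝ} :
    maxEig A ≤ c ↔ (c • 1 - A).PosSemidef := by
  have hquad (v : Fin p → ℝ) : v ⬝ᵥ (c • 1 - A) *ᵥ v = c * (v ⬝ᵥ v) - v ⬝ᵥ A *ᵥ v := by
    simp [sub_mulVec, smul_mulVec, dotProduct_sub]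
  have hsq (v : Fin p → ℝ) : v ⬝ᵥ v = ∑ i, v i ^ 2 := by simp [dotProduct, sq]
  have hH : (c • 1 - A).IsHermitian := (isHermitian_one.smul (.all c)).sub hA
  rw [maxEig_le_iff]
  refine ⟨fun h ↦ .of_dotProduct_mulVec_nonneg hH fun v ↦ ?_, fun h v hv ↦ ?_⟩
  · have hnonneg : 0 ≤ v ⬝ᵥ v := by rw [hsq]; positivity
    rcases hnonneg.eq_or_lt with hv | hv
    · simp [dotProduct_self_eq_zero.1 hv.symm]
    have hunit := h ((√(v ⬝ᵥ v))⁻¹ • v) (by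
      rw [← hsq, dotProduct_smul, smul_dotProduct, smul_smul, smul_eq_mul, ← mul_inv,
        mul_self_sqrt hv.le, inv_mul_cancel₀ hv.ne'])
    rw [mulVec_smul, dotProduct_smul, smul_dotProduct, smul_smul, smul_eq_mul, ← mul_inv,
      mul_self_sqrt hv.le, inv_mul_le_iff₀ hv] at hunit
    rw [star_trivial, hquad]
    linarith
  · have hnonneg := h.dotProduct_mulVec_nonneg v
    rw [star_trivial, hquad, hsq, hv] at hnonneg
    linarith

lemma convex_setOf_maxEig_le [NeZero p] (c : ℝ) :
    Convex ℝ {A : Matrix (Fin p) (Fin p) ℝ | maxEig A ≤ c} := by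
  simp only [maxEig_le_iff, Set.ofPred_forall]
  refine convex_iInter₂ fun v _ ↦ convex_halfSpace_le ⟨fun A B ↦ ?_, fun r A ↦ ?_⟩ c
  · rw [add_mulVec, dotProduct_add]
  · rw [smul_mulVec, dotProduct_smul]

lemma isClosed_setOf_maxEig_le [NeZero p] (c : ℝ) :
    IsClosed {A : Matrix (Fin p) (Fin p) ℝ | maxEig A ≤ c} := by
  simp only [maxEig_le_iff, Set.ofPred_forall]
  exact isClosed_biInter fun v _ ↦ isClosed_le (by fun_prop) continuous_const

lemma nonneg_of_elementary_symmetric_nonneg {x y z : ℝ} (h₁ : 0 ≤ x + y + z)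
    (h₂ : 0 ≤ x * y + y * z + z * x) (h₃ : 0 ≤ x * y * z) : 0 ≤ x := by
  by_contra! hx
  -- `x` would be a negative root of `t ^ 3 - e₁ t ^ 2 + e₂ t - e₃`, all of whose terms are `≤ 0`.
  have hcube : x ^ 3 < 0 := Odd.pow_neg (by decide) hx
  linarith [mul_nonneg h₁ (sq_nonneg x), mul_nonneg h₂ (neg_pos.2 hx).le,
    show x ^ 3 - (x + y + z) * x ^ 2 + (x * y + y * z + z * x) * x - x * y * z = 0 by ring]

lemma posSemidef_fin_three_iff {N : Matrix (Fin 3) (Fin 3) ℝ} (hN : N.IsHermitian) :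
    N.PosSemidef ↔ 0 ≤ N.trace ∧ (N * N).trace ≤ N.trace ^ 2 ∧ 0 ≤ N.det := by
  rw [hN.posSemidef_iff_eigenvalues_nonneg, trace_mul_self_eq_sum_eigenvalues_sq hN,
    hN.trace_eq_sum_eigenvalues, hN.det_eq_prod_eigenvalues]
  simp only [Fin.sum_univ_three, Fin.prod_univ_three, RCLike.ofReal_real_eq_id, id, Pi.le_def,
    Pi.zero_apply, Fin.forall_fin_succ, Fin.succ_zero_eq_one, Fin.succ_one_eq_two,
    IsEmpty.forall_iff, and_true]
  generalize hN.eigenvalues 0 = x, hN.eigenvalues 1 = y, hN.eigenvalues 2 = z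
  constructor
  · rintro ⟨hx, hy, hz⟩
    exact ⟨by positivity, by nlinarith [mul_nonneg hx hy, mul_nonneg hy hz, mul_nonneg hz hx],
      by positivity⟩
  · rintro ⟨h₁, h₂, h₃⟩
    have h₂' : 0 ≤ x * y + y * z + z * x := by linarith
    exact ⟨nonneg_of_elementary_symmetric_nonneg h₁ h₂' h₃,
      nonneg_of_elementary_symmetric_nonneg (y := z) (z := x) (by linarith) (by linarith)
        (by linarith),
      nonneg_of_elementary_symmetric_nonneg (y := x) (z := y) (by linarith) (by linarith)
        (by linarith)⟩

end ExtremeEigenvalues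

section CartanMatrix

open MvPolynomial

lemma norm_sq_eq_fin_five (y : EuclideanSpace ℝ (Fin 5)) :
    ‖y‖ ^ 2 = y 0 ^ 2 + y 1 ^ 2 + y 2 ^ 2 + y 3 ^ 2 + y 4 ^ 2 := by
  rw [EuclideanSpace.real_norm_sq_eq, Fin.sum_univ_five]

/-- The identification, up to the factor `√6`, of `ℝ⁵` with the space of traceless symmetric
`3 × 3` matrices. -/
def cartanMatrix : EuclideanSpace ℝ (Fin 5) →ₗ[ℝ] Matrix (Fin 3) (Fin 3) ℝ where
  toFun y := !![√3 * y 3 - y 4, √3 * y 0, √3 * y 1;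
    √3 * y 0, -(√3 * y 3) - y 4, √3 * y 2;
    √3 * y 1, √3 * y 2, 2 * y 4]
  map_add' y z := by
    ext i j
    fin_cases i <;> fin_cases j <;> simp <;> ring
  map_smul' r y := by
    ext i j
    fin_cases i <;> fin_cases j <;> simp <;> ring

/-- Cartan's isoparametric cubic on `ℝ⁵`, which is half the determinant of `cartanMatrix`. -/
def cartanCubic : MvPolynomial (Fin 5) ℝ :=
  X 4 ^ 3 - C 3 * X 4 * (X 0 ^ 2 + X 3 ^ 2) + C (3 / 2) * X 4 * (X 1 ^ 2 + X 2 ^ 2)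
    + C (3 * √3 / 2) * X 3 * (X 1 ^ 2 - X 2 ^ 2) + C (3 * √3) * X 0 * X 1 * X 2

lemma cartanMatrix_isHermitian (y : EuclideanSpace ℝ (Fin 5)) : (cartanMatrix y).IsHermitian := by
  ext i j
  fin_cases i <;> fin_cases j <;> simp [cartanMatrix]

lemma trace_cartanMatrix (y : EuclideanSpace ℝ (Fin 5)) : (cartanMatrix y).trace = 0 := by
  simp [cartanMatrix, trace_fin_three]
  ring

lemma trace_cartanMatrix_mul_self (y : EuclideanSpace ℝ (Fin 5)) :
    (cartanMatrix y * cartanMatrix y).trace = 6 * ‖y‖ ^ 2 := by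
  have h3 : √3 ^ 2 = 3 := sq_sqrt (by norm_num)
  simp [cartanMatrix, trace_fin_three, norm_sq_eq_fin_five]
  linear_combination 2 * (y 0 ^ 2 + y 1 ^ 2 + y 2 ^ 2 + y 3 ^ 2) * h3

lemma det_smul_one_sub_cartanMatrix (y : EuclideanSpace ℝ (Fin 5)) (a : ℝ) :
    (a • 1 - cartanMatrix y).det = a ^ 3 - 3 * ‖y‖ ^ 2 * a - 2 * eval y cartanCubic := by
  have h3 : √3 ^ 2 = 3 := sq_sqrt (by norm_num)
  simp [det_fin_three, cartanMatrix, cartanCubic, norm_sq_eq_fin_five]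
  linear_combination (-a * (y 0 ^ 2 + y 1 ^ 2 + y 2 ^ 2 + y 3 ^ 2)
    + y 4 * (2 * y 0 ^ 2 + 2 * y 3 ^ 2 - y 1 ^ 2 - y 2 ^ 2)
    + √3 * y 3 * (y 2 ^ 2 - y 1 ^ 2) - 2 * √3 * y 0 * y 1 * y 2) * h3

lemma maxEig_cartanMatrix_le_iff {y : EuclideanSpace ℝ (Fin 5)} {a : ℝ} :
    maxEig (cartanMatrix y) ≤ a ↔
      0 ≤ a ∧ ‖y‖ ^ 2 ≤ a ^ 2 ∧ 2 * eval y cartanCubic ≤ a ^ 3 - 3 * ‖y‖ ^ 2 * a := by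
  have hH : (a • 1 - cartanMatrix y).IsHermitian :=
    (isHermitian_one.smul (.all a)).sub (cartanMatrix_isHermitian y)
  have htrace : (a • 1 - cartanMatrix y).trace = 3 * a := by
    simp [trace_sub, trace_smul, trace_cartanMatrix, mul_comm]
  have htrace_sq : ((a • 1 - cartanMatrix y) * (a • 1 - cartanMatrix y)).trace =
      3 * a ^ 2 + 6 * ‖y‖ ^ 2 := by
    simp [sub_mul, mul_sub, trace_sub, trace_smul, trace_cartanMatrix, trace_cartanMatrix_mul_self]
    ring
  rw [maxEig_le_iff_posSemidef (cartanMatrix_isHermitian y), posSemidef_fin_three_iff hH, htrace,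
    htrace_sq, det_smul_one_sub_cartanMatrix]
  refine and_congr (by simp) (and_congr ?_ ?_)
  · constructor <;> intro h <;> linarith
  · rw [sub_nonneg]

lemma isCartanMunzner_cartanCubic : IsCartanMunzner cartanCubic 3 where
  degree_ne_zero := by norm_num
  isHomogeneous := by
    have hX (i : Fin 5) : (X i : MvPolynomial (Fin 5) ℝ).IsHomogeneous 1 := isHomogeneous_X ℝ i
    have hXX (i j : Fin 5) : (X i ^ 2 + X j ^ 2 : MvPolynomial (Fin 5) ℝ).IsHomogeneous 2 :=
      ((hX i).pow 2).add ((hX j).pow 2)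
    refine .add (.add (.add (.sub ((hX 4).pow 3) ?_) ?_) ?_) ?_
    · exact ((hX 4).C_mul _).mul (hXX 0 3)
    · exact ((hX 4).C_mul _).mul (hXX 1 2)
    · exact ((hX 3).C_mul _).mul (((hX 1).pow 2).sub ((hX 2).pow 2))
    · exact (((hX 0).C_mul _).mul (hX 1)).mul (hX 2)
  polyLaplacian_eq_zero := by
    refine MvPolynomial.funext fun y ↦ ?_
    have pderiv_ofNat (i : Fin 5) (n : ℕ) [n.AtLeastTwo] :
        pderiv i (ofNat(n) : MvPolynomial (Fin 5) ℝ) = 0 := Derivation.map_natCast _ n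
    simp [polyLaplacian, cartanCubic, Fin.sum_univ_five, pderiv_X, Pi.single_apply, pderiv_ofNat]
    ring
  sum_pderiv_sq := by
    refine MvPolynomial.funext fun y ↦ ?_
    have h3 : √3 ^ 2 = 3 := sq_sqrt (by norm_num)
    simp [cartanCubic, Fin.sum_univ_five, pderiv_X, Pi.single_apply]
    ring_nf
    simp only [h3]
    ring

end CartanMatrix

section SphereFeature

open scoped RealInnerProductSpace

/-- The coordinates of the traceless matrix `√5 (3 x xᵀ - ‖x‖² I)` with respect to `cartanMatrix`.
The scaling makes the features of a uniform point of the sphere centred with identity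
covariance. -/
def sphereFeature (x : Fin 3 → ℝ) : EuclideanSpace ℝ (Fin 5) :=
  !₂[√15 * (x 0 * x 1), √15 * (x 0 * x 2), √15 * (x 1 * x 2), √15 / 2 * (x 0 ^ 2 - x 1 ^ 2),
    √5 / 2 * (2 * x 2 ^ 2 - x 0 ^ 2 - x 1 ^ 2)]

lemma measurable_sphereFeature : Measurable sphereFeature := by
  refine ((PiLp.continuous_toLp 2 _).comp (continuous_pi fun i ↦ ?_)).measurable
  fin_cases i <;> dsimp <;> fun_prop

lemma sqrt_fifteen : √15 = √5 * √3 := by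
  rw [← sqrt_mul (by norm_num)]
  norm_num

lemma cartanMatrix_sphereFeature (x : Fin 3 → ℝ) :
    cartanMatrix (sphereFeature x) = √5 • ((3 : ℝ) • vecMulVec x x - (x ⬝ᵥ x) • 1) := by
  have h3 : √3 ^ 2 = 3 := sq_sqrt (by norm_num)
  ext i j
  fin_cases i <;> fin_cases j <;>
    simp [cartanMatrix, sphereFeature, vecMulVec_apply, dotProduct, Fin.sum_univ_three,
      sqrt_fifteen] <;> grind

lemma inner_sphereFeature (x : Fin 3 → ℝ) (t : EuclideanSpace ℝ (Fin 5)) :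
    ⟪sphereFeature x, t⟫ = √5 / 2 * (x ⬝ᵥ cartanMatrix t *ᵥ x) := by
  simp [PiLp.inner_apply, cartanMatrix, sphereFeature, Fin.sum_univ_five, sqrt_fifteen, dotProduct,
    mulVec, Fin.sum_univ_three]
  ring

namespace IsSphereUniform

variable {U : Measure (Fin 3 → ℝ)} [IsProbabilityMeasure U]

lemma integral_inner_sphereFeature (hU : IsSphereUniform U) (t : EuclideanSpace ℝ (Fin 5)) :
    ∫ x, ⟪sphereFeature x, t⟫ ∂U = 0 := by
  have h := hU.card_mul_integral_quadraticForm (cartanMatrix_isHermitian t)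
  rw [trace_cartanMatrix, Fintype.card_fin] at h
  simp only [inner_sphereFeature, integral_const_mul]
  linear_combination √5 / 6 * h

lemma integral_inner_sphereFeature_sq (hU : IsSphereUniform U) (t : EuclideanSpace ℝ (Fin 5)) :
    ∫ x, ⟪sphereFeature x, t⟫ ^ 2 ∂U = ‖t‖ ^ 2 := by
  have h := hU.card_mul_integral_quadraticForm_sq (cartanMatrix_isHermitian t)
  rw [trace_cartanMatrix, trace_cartanMatrix_mul_self, Fintype.card_fin] at h
  simp only [inner_sphereFeature, mul_pow, div_pow, integral_const_mul,
    sq_sqrt (by norm_num : (0 : ℝ) ≤ 5)]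
  push_cast at h
  linear_combination h / 12

end IsSphereUniform

lemma cartanMatrix_normalizedSum_sphereFeature {n : ℕ} (hn : n ≠ 0) {x : Fin n → (Fin 3 → ℝ)}
    (hx : ∀ i, ∑ a, x i a ^ 2 = 1) :
    cartanMatrix (normalizedSum sphereFeature n x) =
      (√5 * √n * 3) • Sn 3 n x - (√5 * √n) • 1 := by
  have hn' : (n : ℝ) ≠ 0 := Nat.cast_ne_zero.2 hn
  have hsum : ∑ i, vecMulVec (x i) (x i) = (n : ℝ) • Sn 3 n x := by
    ext a b
    simp [Sn, Matrix.sum_apply, vecMulVec_apply, hn']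
  have hunit (i : Fin n) : x i ⬝ᵥ x i = 1 := by simpa [dotProduct, sq] using hx i
  have hsqrt : (√n)⁻¹ * n = √n := by rw [inv_mul_eq_div, div_sqrt]
  rw [normalizedSum, map_smul, map_sum]
  simp only [cartanMatrix_sphereFeature, hunit, one_smul, ← Finset.smul_sum,
    Finset.sum_sub_distrib, hsum, Finset.sum_const, Finset.card_univ, Fintype.card_fin,
    ← Nat.cast_smul_eq_nsmul ℝ]
  rw [smul_sub, smul_sub]
  congr 1
  · simp only [smul_smul]
    congr 1
    linear_combination 3 * √5 * hsqrt
  · simp only [smul_smul]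
    congr 1
    linear_combination √5 * hsqrt

lemma maxEig_cartanMatrix_normalizedSum_sphereFeature {n : ℕ} (hn : n ≠ 0)
    {x : Fin n → (Fin 3 → ℝ)} (hx : ∀ i, ∑ a, x i a ^ 2 = 1) :
    maxEig (cartanMatrix (normalizedSum sphereFeature n x)) =
      √5 * (√n * (3 * maxEig (Sn 3 n x) - 1)) := by
  have : (0 : ℝ) < n := by positivity
  rw [cartanMatrix_normalizedSum_sphereFeature hn hx, maxEig_smul_sub_smul_one _ (by positivity)]
  ring

lemma maxEig_cartanMatrix_normalizedSum_neg_sphereFeature {n : ℕ} (hn : n ≠ 0)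
    {x : Fin n → (Fin 3 → ℝ)} (hx : ∀ i, ∑ a, x i a ^ 2 = 1) :
    maxEig (cartanMatrix (normalizedSum (-sphereFeature) n x)) =
      √5 * -(√n * (3 * minEig (Sn 3 n x) - 1)) := by
  have : (0 : ℝ) < n := by positivity
  have hneg : normalizedSum (-sphereFeature) n x = -normalizedSum sphereFeature n x := by
    simp [normalizedSum]
  rw [hneg, map_neg, cartanMatrix_normalizedSum_sphereFeature hn hx, neg_sub,
    show (√5 * √n) • (1 : Matrix (Fin 3) (Fin 3) ℝ) - (√5 * √n * 3) • Sn 3 n x =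
      (√5 * √n * 3) • -Sn 3 n x - (-(√5 * √n)) • 1 by module,
    maxEig_smul_sub_smul_one _ (by positivity), maxEig_neg]
  ring

end SphereFeature

section CartanSublevel

open scoped RealInnerProductSpace

/-- The set of the `y` for which all eigenvalues of `cartanMatrix y` are at most `a`. -/
def cartanSublevel (a : ℝ) : Set (EuclideanSpace ℝ (Fin 5)) := {y | maxEig (cartanMatrix y) ≤ a}

lemma convex_cartanSublevel (a : ℝ) : Convex ℝ (cartanSublevel a) :=
  (convex_setOf_maxEig_le a).linear_preimage cartanMatrix

lemma measurableSet_cartanSublevel (a : ℝ) : MeasurableSet (cartanSublevel a) :=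
  ((isClosed_setOf_maxEig_le a).preimage
    (LinearMap.continuous_of_finiteDimensional cartanMatrix)).measurableSet

theorem tendsto_measure_setOf_le_of_maxEig_cartanMatrix {Ω : Type*} [MeasurableSpace Ω]
    {P : Measure Ω} [IsProbabilityMeasure P] {f : Ω → EuclideanSpace ℝ (Fin 5)}
    (hf : Measurable f) (hmean : ∀ t, ∫ ω, ⟪f ω, t⟫ ∂P = 0)
    (hvar : ∀ t, ∫ ω, ⟪f ω, t⟫ ^ 2 ∂P = ‖t‖ ^ 2) {T : ∀ n, (Fin n → Ω) → ℝ} {c : ℝ} (hc : 0 < c)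
    (hT : ∀ n ≠ 0, ∀ᵐ ω ∂(Measure.pi fun _ : Fin n ↦ P),
      maxEig (cartanMatrix (normalizedSum f n ω)) = c * T n ω) (ℓ : ℝ) :
    Tendsto (fun n ↦ ((Measure.pi fun _ : Fin n ↦ P) {ω | T n ω ≤ ℓ}).toReal) atTop
      (𝓝 ((stdGaussian _).real (cartanSublevel (c * ℓ)))) := by
  refine (tendsto_measure_normalizedSum_preimage_of_convex hf hmean hvar
    (convex_cartanSublevel (c * ℓ)) (measurableSet_cartanSublevel (c * ℓ))).congr' ?_
  filter_upwards [eventually_ne_atTop 0] with n hn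
  refine congrArg ENNReal.toReal (measure_congr ?_)
  filter_upwards [hT n hn] with ω hω
  refine propext ?_
  change maxEig _ ≤ c * ℓ ↔ T n ω ≤ ℓ
  rw [hω, mul_le_mul_iff_right₀ hc]

end CartanSublevel

section GaussianSublevel

open Metric Module MvPolynomial

lemma stdGaussian_real_eq_polar {E : Type*} [NormedAddCommGroup E] [InnerProductSpace ℝ E]
    [FiniteDimensional ℝ E] [MeasurableSpace E] [BorelSpace E] [Nontrivial E] {C : Set E}
    (hC : MeasurableSet C) : (stdGaussian E).real C =
      (∫ r in Set.Ioi (0 : ℝ), r ^ (finrank ℝ E - 1) *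
        ((volume : Measure E).toSphere.real {x | r • x.1 ∈ C} * exp (-r ^ 2 / 2))) /
      ((volume : Measure E).toSphere.real Set.univ *
        gaussianRadialMoment (finrank ℝ E - 1)) := by
  have hden : ∫ y : E, exp (-‖y‖ ^ 2 / 2) = (volume : Measure E).toSphere.real Set.univ *
      gaussianRadialMoment (finrank ℝ E - 1) := by
    simpa using integral_homogeneous_mul_gaussian (μ := (volume : Measure E)) (g := fun _ ↦ 1)
      (k := 0) (by simp)
  have hint : Integrable (fun y : E ↦ C.indicator 1 y * exp (-‖y‖ ^ 2 / 2)) := by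
    refine ((integrable_exp_neg_sq_norm_div_two E).indicator hC).congr (.of_forall fun y ↦ ?_)
    by_cases hy : y ∈ C <;> simp [hy]
  rw [stdGaussian_real_eq E hC, hden, integral_eq_integral_toSphere_prod, integral_prod_symm _
    ((integrable_iff_integrable_toSphere_prod _ _).1 hint), ← integral_volumeIoiPow _ fun r : ℝ ↦
      (volume : Measure E).toSphere.real {x | r • x.1 ∈ C} * exp (-r ^ 2 / 2)]
  congr with r
  have hm : MeasurableSet {x : sphere (0 : E) 1 | r.1 • x.1 ∈ C} :=
    (continuous_subtype_val.const_smul r.1).measurable hC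
  rw [← integral_indicator_one hm, ← integral_mul_const]
  congr with x
  rw [norm_smul, norm_eq_of_mem_sphere, mul_one, norm_eq_abs, sq_abs]
  rfl

variable {a r : ℝ}

lemma smul_mem_cartanSublevel_iff (ha : 0 < a) (hr : 0 < r)
    (x : sphere (0 : EuclideanSpace ℝ (Fin 5)) 1) : r • x.1 ∈ cartanSublevel a ↔
      r ≤ a ∧ eval x.1 cartanCubic ≤ (a ^ 3 - 3 * r ^ 2 * a) / (2 * r ^ 3) := by
  rw [cartanSublevel, Set.mem_ofPred_eq, maxEig_cartanMatrix_le_iff, norm_smul,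
    norm_eq_of_mem_sphere, mul_one, norm_eq_abs, sq_abs, WithLp.ofLp_smul,
    eval_smul_of_isHomogeneous isCartanMunzner_cartanCubic.isHomogeneous,
    le_div_iff₀ (by positivity), pow_le_pow_iff_left₀ hr.le ha.le two_ne_zero]
  refine ⟨fun h ↦ ⟨h.2.1, by linarith [h.2.2]⟩, fun h ↦ ⟨ha.le, h.1, by linarith [h.2]⟩⟩

lemma sphereMeasure_smul_mem_cartanSublevel (ha : 0 < a) (hr : 0 < r) (hra : r ≤ a) :
    (sphereMeasure (Fin 5)).real {x | r • x.1 ∈ cartanSublevel a} =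
      (sphereMeasure (Fin 5)).real Set.univ *
        (max (min 1 ((a ^ 3 - 3 * r ^ 2 * a) / (2 * r ^ 3)) + 1) 0 / 2) := by
  rw [← isCartanMunzner_cartanCubic.sphereMeasure_real_setOf_eval_le (by simp)]
  simp only [smul_mem_cartanSublevel_iff ha hr, hra, true_and]

lemma sphereMeasure_smul_mem_cartanSublevel_of_le_half (ha : 0 < a) (hr : 0 < r)
    (hra : r ≤ a / 2) : (sphereMeasure (Fin 5)).real {x | r • x.1 ∈ cartanSublevel a} =
      (sphereMeasure (Fin 5)).real Set.univ := by
  have h1 : 1 ≤ (a ^ 3 - 3 * r ^ 2 * a) / (2 * r ^ 3) := by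
    rw [le_div_iff₀ (by positivity)]
    nlinarith [mul_nonneg (by linarith : 0 ≤ a - 2 * r) (sq_nonneg (a + r))]
  rw [sphereMeasure_smul_mem_cartanSublevel ha hr (by linarith), min_eq_left h1]
  norm_num

lemma sphereMeasure_smul_mem_cartanSublevel_of_half_le (ha : 0 < a)
    (hra : a / 2 ≤ r) (hra' : r ≤ a) :
    r ^ 4 * (sphereMeasure (Fin 5)).real {x | r • x.1 ∈ cartanSublevel a} =
      (sphereMeasure (Fin 5)).real Set.univ *
        (r ^ 4 / 2 + (a ^ 3 * r - 3 * a * r ^ 3) / 4) := by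
  have hr : 0 < r := by linarith
  have h1 : (a ^ 3 - 3 * r ^ 2 * a) / (2 * r ^ 3) ≤ 1 := by
    rw [div_le_iff₀ (by positivity)]
    nlinarith [mul_nonneg (by linarith : 0 ≤ 2 * r - a) (sq_nonneg (a + r))]
  have h2 : 0 ≤ (a ^ 3 - 3 * r ^ 2 * a) / (2 * r ^ 3) + 1 := by
    rw [← neg_le_iff_add_nonneg, le_div_iff₀ (by positivity)]
    nlinarith [mul_nonneg (by linarith : 0 ≤ a + 2 * r) (sq_nonneg (a - r))]
  rw [sphereMeasure_smul_mem_cartanSublevel ha hr hra', min_eq_right h1, max_eq_left h2]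
  field_simp
  ring

lemma sphereMeasure_smul_mem_cartanSublevel_of_lt (ha : 0 < a) (hra : a < r) :
    (sphereMeasure (Fin 5)).real {x | r • x.1 ∈ cartanSublevel a} = 0 := by
  simp [smul_mem_cartanSublevel_iff ha (ha.trans hra), hra.not_ge]

lemma setIntegral_Ioi_cartanSublevel (ha : 0 < a) :
    ∫ r in Set.Ioi (0 : ℝ), r ^ 4 *
        ((sphereMeasure (Fin 5)).real {x | r • x.1 ∈ cartanSublevel a} * exp (-r ^ 2 / 2)) =
      (sphereMeasure (Fin 5)).real Set.univ * ((∫ r in (0)..(a / 2), r ^ 4 * exp (-r ^ 2 / 2)) +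
        ∫ r in (a / 2)..a, (r ^ 4 / 2 + (a ^ 3 * r - 3 * a * r ^ 3) / 4) * exp (-r ^ 2 / 2)) := by
  set f : ℝ → ℝ := fun r ↦ r ^ 4 *
    ((sphereMeasure (Fin 5)).real {x | r • x.1 ∈ cartanSublevel a} * exp (-r ^ 2 / 2)) with hf
  have eqOn_inner : Set.EqOn f
      (fun r ↦ (sphereMeasure (Fin 5)).real Set.univ * (r ^ 4 * exp (-r ^ 2 / 2)))
      (Set.Ioc 0 (a / 2)) := by
    intro r hr
    simp only [hf, sphereMeasure_smul_mem_cartanSublevel_of_le_half ha hr.1 hr.2]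
    ring
  have eqOn_outer : Set.EqOn f (fun r ↦ (sphereMeasure (Fin 5)).real Set.univ *
      ((r ^ 4 / 2 + (a ^ 3 * r - 3 * a * r ^ 3) / 4) * exp (-r ^ 2 / 2)))
      (Set.Ioc (a / 2) a) := by
    intro r hr
    simp only [hf]
    rw [← mul_assoc, sphereMeasure_smul_mem_cartanSublevel_of_half_le ha hr.1.le hr.2, mul_assoc]
  have integrableOn_inner : IntegrableOn f (Set.Ioc 0 (a / 2)) := by
    rw [integrableOn_congr_fun eqOn_inner measurableSet_Ioc]
    exact (Continuous.integrableOn_Icc (by fun_prop)).mono_set Set.Ioc_subset_Icc_self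
  have integrableOn_outer : IntegrableOn f (Set.Ioc (a / 2) a) := by
    rw [integrableOn_congr_fun eqOn_outer measurableSet_Ioc]
    exact (Continuous.integrableOn_Icc (by fun_prop)).mono_set Set.Ioc_subset_Icc_self
  have hsupp : ∫ r in Set.Ioi (0 : ℝ), f r = ∫ r in Set.Ioc 0 a, f r := by
    refine setIntegral_eq_of_subset_of_forall_sdiff_eq_zero measurableSet_Ioi
      Set.Ioc_subset_Ioi_self fun r hr ↦ ?_
    have : a < r := not_le.1 fun h ↦ hr.2 ⟨hr.1, h⟩
    simp [hf, sphereMeasure_smul_mem_cartanSublevel_of_lt ha this]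
  rw [hsupp, ← Set.Ioc_union_Ioc_eq_Ioc (by positivity : 0 ≤ a / 2) (by linarith),
    setIntegral_union (Set.Ioc_disjoint_Ioc_of_le le_rfl) measurableSet_Ioc integrableOn_inner
      integrableOn_outer,
    setIntegral_congr_fun measurableSet_Ioc eqOn_inner,
    setIntegral_congr_fun measurableSet_Ioc eqOn_outer,
    intervalIntegral.integral_of_le (by positivity), intervalIntegral.integral_of_le (by linarith),
    integral_const_mul, integral_const_mul, mul_add]

end GaussianSublevel

section Primitives

open intervalIntegral

lemma gaussianRadialMoment_zero : gaussianRadialMoment 0 = √(2 * π) / 2 := by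
  have h := integral_gaussian_Ioi (1 / 2)
  rw [show π / (1 / 2) = 2 * π by ring] at h
  rw [← h, gaussianRadialMoment]
  congr with r
  ring_nf

lemma hasDerivAt_exp_neg_sq_div_two (x : ℝ) :
    HasDerivAt (fun r : ℝ ↦ exp (-r ^ 2 / 2)) (-x * exp (-x ^ 2 / 2)) x := by
  refine (((hasDerivAt_pow 2 x).neg.div_const 2).exp).congr_deriv ?_
  push_cast
  simp only [Pi.neg_apply]
  ring

lemma hasDerivAt_integral_exp_neg_sq_div_two (x : ℝ) :
    HasDerivAt (fun r : ℝ ↦ ∫ u in (0)..r, exp (-u ^ 2 / 2)) (exp (-x ^ 2 / 2)) x :=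
  integral_hasDerivAt_right (Continuous.intervalIntegrable (by fun_prop) _ _)
    (Continuous.stronglyMeasurableAtFilter (by fun_prop) _ _)
    (Continuous.continuousAt (by fun_prop))

lemma integral_pow_four_mul_exp (b : ℝ) :
    ∫ r in (0)..b, r ^ 4 * exp (-r ^ 2 / 2) =
      3 * (∫ u in (0)..b, exp (-u ^ 2 / 2)) - (b ^ 3 + 3 * b) * exp (-b ^ 2 / 2) := by
  rw [integral_eq_sub_of_hasDerivAt (f := fun r ↦ 3 * (∫ u in (0)..r, exp (-u ^ 2 / 2)) -
    (r ^ 3 + 3 * r) * exp (-r ^ 2 / 2)) (fun x _ ↦ ?_)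
    (Continuous.intervalIntegrable (by fun_prop) _ _)]
  · simp
  · refine (((hasDerivAt_integral_exp_neg_sq_div_two x).const_mul 3).sub
      (((hasDerivAt_pow 3 x).add ((hasDerivAt_id x).const_mul 3)).mul
        (hasDerivAt_exp_neg_sq_div_two x))).congr_deriv ?_
    simp only [Pi.add_apply, id]
    push_cast
    ring

lemma integral_cap_mul_exp (a : ℝ) :
    ∫ r in (a / 2)..a, (r ^ 4 / 2 + (a ^ 3 * r - 3 * a * r ^ 3) / 4) * exp (-r ^ 2 / 2) =
      3 / 2 * (∫ u in (0)..a, exp (-u ^ 2 / 2)) - 3 / 2 * (∫ u in (0)..(a / 2), exp (-u ^ 2 / 2))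
        + (a ^ 3 / 8 - 3 / 4 * a) * exp (-(a / 2) ^ 2 / 2) := by
  rw [integral_eq_sub_of_hasDerivAt (f := fun r ↦ 3 / 2 * (∫ u in (0)..r, exp (-u ^ 2 / 2)) +
    (-(r ^ 3 + 3 * r) / 2 - a ^ 3 / 4 + 3 / 4 * a * (r ^ 2 + 2)) * exp (-r ^ 2 / 2))
    (fun x _ ↦ ?_) (Continuous.intervalIntegrable (by fun_prop) _ _)]
  · ring
  · have hp : HasDerivAt (fun r ↦ -(r ^ 3 + 3 * r) / 2 - a ^ 3 / 4 + 3 / 4 * a * (r ^ 2 + 2))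
        (-(3 * x ^ 2 + 3) / 2 + 3 / 4 * a * (2 * x)) x := by
      refine ((((((hasDerivAt_pow 3 x).add ((hasDerivAt_id x).const_mul 3)).neg).div_const
        2).sub_const _).add (((hasDerivAt_pow 2 x).add_const 2).const_mul
          (3 / 4 * a))).congr_deriv ?_
      push_cast
      ring
    refine (((hasDerivAt_integral_exp_neg_sq_div_two x).const_mul (3 / 2)).add
      (hp.mul (hasDerivAt_exp_neg_sq_div_two x))).congr_deriv ?_
    ring

lemma stdNormalCDF_eq (t : ℝ) :
    stdNormalCDF t = 1 / 2 + (∫ u in (0)..t, exp (-u ^ 2 / 2)) / √(2 * π) := by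
  have hint : Integrable fun u : ℝ ↦ exp (-u ^ 2 / 2) := by
    simpa using integrable_exp_neg_sq_norm_div_two ℝ
  have h0 : ∫ u in Set.Iic (0 : ℝ), exp (-u ^ 2 / 2) = √(2 * π) / 2 := by
    have := integral_comp_neg_Iic 0 fun u : ℝ ↦ exp (-u ^ 2 / 2)
    simp only [neg_zero, neg_sq] at this
    rw [this, ← gaussianRadialMoment_zero, gaussianRadialMoment]
    simp
  have h := integral_Iic_sub_Iic (a := 0) (b := t) hint.integrableOn hint.integrableOn
  have hs : √(2 * π) ≠ 0 := by positivity
  rw [stdNormalCDF, MeasureTheory.integral_const_mul, ← h, h0]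
  field_simp
  ring

end Primitives

section LimitLaw

lemma sphereMeasure_real_univ_pos (ι : Type*) [Fintype ι] [Nonempty ι] :
    0 < (sphereMeasure ι).real Set.univ := by
  rw [sphereMeasure, Measure.toSphere_real_apply_univ]
  have : 0 < (volume : Measure (EuclideanSpace ℝ ι)).real (Metric.ball 0 1) :=
    ENNReal.toReal_pos (Metric.measure_ball_pos _ _ one_pos).ne' measure_ball_lt_top.ne
  have : 0 < Module.finrank ℝ (EuclideanSpace ℝ ι) := Module.finrank_pos
  positivity

lemma gaussianRadialMoment_four : gaussianRadialMoment 4 = 3 * (√(2 * π) / 2) := by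
  rw [gaussianRadialMoment_add_two 2, gaussianRadialMoment_add_two 0, gaussianRadialMoment_zero]
  norm_num

lemma stdGaussian_cartanSublevel_of_pos {a : ℝ} (ha : 0 < a) :
    (stdGaussian (EuclideanSpace ℝ (Fin 5))).real (cartanSublevel a) =
      stdNormalCDF a + stdNormalCDF (a / 2) + 3 * stdNormalCDF'' (a / 2) - 1 := by
  have hs : √(2 * π) ≠ 0 := by positivity
  rw [stdGaussian_real_eq_polar (measurableSet_cartanSublevel a), finrank_euclideanSpace_fin,
    setIntegral_Ioi_cartanSublevel ha,
    mul_div_mul_left _ _ (sphereMeasure_real_univ_pos (Fin 5)).ne', gaussianRadialMoment_four,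
    integral_pow_four_mul_exp, integral_cap_mul_exp, stdNormalCDF_eq, stdNormalCDF_eq,
    stdNormalCDF'']
  field_simp
  ring

lemma stdGaussian_cartanSublevel_of_nonpos {a : ℝ} (ha : a ≤ 0) :
    (stdGaussian (EuclideanSpace ℝ (Fin 5))).real (cartanSublevel a) = 0 := by
  have hsub : cartanSublevel a ⊆ {0} := by
    intro y hy
    obtain ⟨ha', hy', -⟩ := maxEig_cartanMatrix_le_iff.1 hy
    simpa [le_antisymm ha ha'] using hy'
  have h0 : (volume : Measure (EuclideanSpace ℝ (Fin 5))) {0} = 0 := measure_singleton 0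
  rw [measureReal_def, measure_mono_null hsub (stdGaussian_absolutelyContinuous _ h0),
    ENNReal.toReal_zero]

lemma stdGaussian_cartanSublevel_sqrt_five_mul (ℓ : ℝ) :
    (stdGaussian (EuclideanSpace ℝ (Fin 5))).real (cartanSublevel (√5 * ℓ)) =
      if 0 < ℓ then stdNormalCDF (√5 * ℓ) + stdNormalCDF (√5 * ℓ / 2)
        + 3 * stdNormalCDF'' (√5 * ℓ / 2) - 1 else 0 := by
  split_ifs with hℓ
  · exact stdGaussian_cartanSublevel_of_pos (by positivity)
  · exact stdGaussian_cartanSublevel_of_nonpos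
      (mul_nonpos_of_nonneg_of_nonpos (sqrt_nonneg 5) (not_lt.1 hℓ))

end LimitLaw

/-- Corollary 5.1(ii), case `p = 3`, one-sided statistics.
Under uniformity on `S²`, both `T_+^{(n)} = √n(3λ̂_{n1}-1)` and `T_-^{(n)} = -√n(3λ̂_{n3}-1)`
converge in distribution to the law with cdf
`ℓ ↦ {Φ(√5 ℓ) + Φ(√5 ℓ/2) + 3Φ''(√5 ℓ/2) - 1} 1[ℓ > 0]` (this cdf is continuous, so cdf
convergence holds at every point). -/
theorem sphere_onesided_eigenvalue_statistics_null_limit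
    (U : Measure (Fin 3 → ℝ)) [IsProbabilityMeasure U]
    (hUsphere : U {x : Fin 3 → ℝ | ∑ a, x a ^ 2 = 1}ᶜ = 0)
    (hUrot : ∀ O : Matrix (Fin 3) (Fin 3) ℝ, O * Oᵀ = 1 →
      Measure.map (fun x => O.mulVec x) U = U) :
    (∀ ℓ : ℝ,
      Tendsto (fun n => ((Measure.pi (fun _ : Fin n => U))
          {x | Real.sqrt n * (3 * maxEig (Sn 3 n x) - 1) ≤ ℓ}).toReal) atTop
        (𝓝 (if 0 < ℓ then
          stdNormalCDF (Real.sqrt 5 * ℓ) + stdNormalCDF (Real.sqrt 5 * ℓ / 2)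
            + 3 * stdNormalCDF'' (Real.sqrt 5 * ℓ / 2) - 1 else 0))) ∧
    (∀ ℓ : ℝ,
      Tendsto (fun n => ((Measure.pi (fun _ : Fin n => U))
          {x | -(Real.sqrt n * (3 * minEig (Sn 3 n x) - 1)) ≤ ℓ}).toReal) atTop
        (𝓝 (if 0 < ℓ then
          stdNormalCDF (Real.sqrt 5 * ℓ) + stdNormalCDF (Real.sqrt 5 * ℓ / 2)
            + 3 * stdNormalCDF'' (Real.sqrt 5 * ℓ / 2) - 1 else 0))) := by
  have hU : IsSphereUniform U := ⟨hUsphere, hUrot⟩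
  have h5 : (0 : ℝ) < √5 := by positivity
  simp only [← stdGaussian_cartanSublevel_sqrt_five_mul]
  constructor
  · refine tendsto_measure_setOf_le_of_maxEig_cartanMatrix measurable_sphereFeature
      hU.integral_inner_sphereFeature hU.integral_inner_sphereFeature_sq h5 fun n hn ↦ ?_
    filter_upwards [hU.ae_pi_sum_sq_eq_one n] with x hx
    exact maxEig_cartanMatrix_normalizedSum_sphereFeature hn hx
  · refine tendsto_measure_setOf_le_of_maxEig_cartanMatrix measurable_sphereFeature.neg
      (fun t ↦ ?_) (fun t ↦ ?_) h5 fun n hn ↦ ?_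
    · simp [integral_neg, hU.integral_inner_sphereFeature]
    · simp [hU.integral_inner_sphereFeature_sq]
    filter_upwards [hU.ae_pi_sum_sq_eq_one n] with x hx
    exact maxEig_cartanMatrix_normalizedSum_neg_sphereFeature hn hx

end
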